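/- Let b ∈ ℝ, c < 0, and let m1 > 0 be real. For every integer m ≥ 2 there exist constants C > 0 and δ > 0 such that for all real q with 0 < q < δ, the (2m−1)-th gap length of the operator with potential v(x) = b·q^{m1}·cos 2x + c·q^{2m1}·cos 4x satisfies |γ_{2m−1}(q) − 32·|(b/2)·Π_{k=1}^{m−1} ((b/2)² + 8c·k²)|·q^{m1·(2m−1)} / (2^{4m}·((2m−2)!)²)| ≤ C·q^{m1·(2m+1)}. -/

import Mathlib

open Real

noncomputable section

/-- `f` is a (possibly zero) solution of `-f'' + v f = λ f` that is `π`-periodic. -/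
def IsPerEF (v : ℝ → ℝ) (lam : ℝ) (f : ℝ → ℝ) : Prop :=
  ContDiff ℝ 2 f ∧ (∀ x, -(deriv (deriv f) x) + v x * f x = lam * f x) ∧
    ∀ x, f (x + Real.pi) = f x

/-- `f` is a (possibly zero) solution of `-f'' + v f = λ f` with `f(x+π) = -f(x)`. -/
def IsSemiEF (v : ℝ → ℝ) (lam : ℝ) (f : ℝ → ℝ) : Prop :=
  ContDiff ℝ 2 f ∧ (∀ x, -(deriv (deriv f) x) + v x * f x = lam * f x) ∧
    ∀ x, f (x + Real.pi) = -f x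

/-- Multiplicity of `λ` as a periodic eigenvalue: the dimension of the space of
π-periodic solutions. -/
def perMult (v : ℝ → ℝ) (lam : ℝ) : ℕ :=
  Module.finrank ℝ (Submodule.span ℝ {f : ℝ → ℝ | IsPerEF v lam f})

/-- Multiplicity of `λ` as a semi-periodic eigenvalue. -/
def semiMult (v : ℝ → ℝ) (lam : ℝ) : ℕ :=
  Module.finrank ℝ (Submodule.span ℝ {f : ℝ → ℝ | IsSemiEF v lam f})

/-- `lamP` enumerates the periodic eigenvalues of `-D² + v` in nondecreasing order
with multiplicity (indices `0, 1, 2, …`). -/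
def EnumPer (v : ℝ → ℝ) (lamP : ℕ → ℝ) : Prop :=
  Monotone lamP ∧ (∀ n, ∃ f, f ≠ 0 ∧ IsPerEF v (lamP n) f) ∧
    ∀ lam : ℝ, Nat.card {n : ℕ // lamP n = lam} = perMult v lam

/-- `lamM` enumerates the semi-periodic eigenvalues of `-D² + v` in nondecreasing order
with multiplicity (indices `1, 2, 3, …`). -/
def EnumSemi (v : ℝ → ℝ) (lamM : ℕ → ℝ) : Prop :=
  MonotoneOn lamM {n : ℕ | 1 ≤ n} ∧ (∀ n, 1 ≤ n → ∃ f, f ≠ 0 ∧ IsSemiEF v (lamM n) f) ∧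
    ∀ lam : ℝ, Nat.card {n : ℕ // 1 ≤ n ∧ lamM n = lam} = semiMult v lam

/-- The length of the `n`-th instability interval: `λ_{n+1}^- - λ_n^-` for odd `n`,
`λ_n^+ - λ_{n-1}^+` for even `n`. -/
def gapLen (lamP lamM : ℕ → ℝ) (n : ℕ) : ℝ :=
  if Odd n then lamM (n + 1) - lamM n else lamP n - lamP (n - 1)

/-!
Write the potential as `-2β cos 2x - 2α² cos 4x`. Multiplying a semi-periodic eigenfunction by
`e^{-α cos 2x}` turns the eigenvalue equation into Ince's equation, whose coefficients in the
cosines (or sines) of odd multiples of `x` satisfy a three-term recursion; the cosine and the sine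
recursion differ only in a boundary entry `±β`. For small `α` and `β` each of the two has exactly
one eigenvalue near `(2j+1)²`, so the gap of index `2j+1` is the distance between the cosine and
the sine eigenvalue. The boundary entry acts on the `j`-th equation only through the chain of
couplings from row `0` to row `j`; eliminating these rows by leading minors shows that the two
eigenvalues differ, to leading order, by `2β ∏ (β² - 16α²k²)` divided by the square of
`∏ ((2k+1)² - (2j+1)²)`.
-/

namespace WhittakerHill

open Filter Topology Asymptotics
open scoped BoundedContinuousFunction

section TridiagonalSystem

/-- The squares `(2k+1)²` of the odd integers: the semi-periodic eigenvalues of `-D²`, each of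
multiplicity two. -/
def oddSq (k : ℕ) : ℝ := (2 * (k : ℝ) + 1) ^ 2

/-- The superdiagonal entry in row `k` of the recursion for the Fourier coefficients. -/
def upper (α β : ℝ) (k : ℕ) : ℝ := β + 4 * α * (k + 1)

/-- The subdiagonal entry in row `k` of the recursion for the Fourier coefficients. -/
def lower (α β : ℝ) (k : ℕ) : ℝ := β - 4 * α * k

/-- The shift of a sequence to the right, with the reflecting boundary condition
`A (-1) = σ * A 0`: `σ = 1` for cosine series and `σ = -1` for sine series. -/
def reflectedPrev (σ : ℝ) : (ℕ → ℝ) →ₗ[ℝ] (ℕ → ℝ) where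
  toFun A
    | 0 => σ * A 0
    | k + 1 => A k
  map_add' A A' := by ext (_ | k) <;> simp [mul_add]
  map_smul' r A := by ext (_ | k) <;> simp [mul_left_comm]

/-- The off-diagonal part of the recursion for the Fourier coefficients of `e^{-α cos 2x} f`, where
`f` is a semi-periodic solution: the recursion reads `(oddSq k - μ) * A k = offDiag α β σ A k`. -/
def offDiag (α β σ : ℝ) : (ℕ → ℝ) →ₗ[ℝ] (ℕ → ℝ) where
  toFun A k := upper α β k * A (k + 1) + lower α β k * reflectedPrev σ A k
  map_add' A A' := by ext k; simp only [map_add, Pi.add_apply]; ring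
  map_smul' r A := by
    ext k; simp only [map_smul, Pi.smul_apply, smul_eq_mul, RingHom.id_apply]; ring

/-- A common size of the off-diagonal coefficients; the small parameter of the perturbation
theory. -/
def coupling (α β : ℝ) : ℝ := 2 * |β| + 8 * |α|

variable {α β σ μ μ' : ℝ} {j k : ℕ}

lemma reflectedPrev_zero (σ : ℝ) (A : ℕ → ℝ) : reflectedPrev σ A 0 = σ * A 0 := rfl

lemma reflectedPrev_succ (σ : ℝ) (A : ℕ → ℝ) (k : ℕ) : reflectedPrev σ A (k + 1) = A k := rfl

lemma offDiag_apply (α β σ : ℝ) (A : ℕ → ℝ) (k : ℕ) :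
    offDiag α β σ A k = upper α β k * A (k + 1) + lower α β k * reflectedPrev σ A k := rfl

lemma coupling_nonneg (α β : ℝ) : 0 ≤ coupling α β := by unfold coupling; positivity

lemma two_mul_abs_upper_le (α β : ℝ) (k : ℕ) : 2 * |upper α β k| ≤ coupling α β * (k + 1) := by
  have h := abs_add_le β (4 * α * (k + 1))
  rw [abs_mul, abs_mul, abs_of_pos (by positivity : (0 : ℝ) < k + 1),
    abs_of_pos (four_pos (α := ℝ))] at h
  rw [coupling, upper]
  nlinarith [abs_nonneg β, (Nat.cast_nonneg k : (0 : ℝ) ≤ k)]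

lemma two_mul_abs_lower_le (α β : ℝ) (k : ℕ) : 2 * |lower α β k| ≤ coupling α β * (k + 1) := by
  have h := abs_sub β (4 * α * k)
  rw [abs_mul, abs_mul, Nat.abs_cast, abs_of_pos (four_pos (α := ℝ))] at h
  rw [coupling, lower]
  nlinarith [abs_nonneg β, abs_nonneg α, (Nat.cast_nonneg k : (0 : ℝ) ≤ k)]

lemma abs_reflectedPrev_le {M : ℝ} {A : ℕ → ℝ} (hσ : |σ| ≤ 1) (hA : ∀ k, |A k| ≤ M) (k : ℕ) :
    |reflectedPrev σ A k| ≤ M := by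
  cases k with
  | zero =>
    rw [reflectedPrev_zero, abs_mul]
    exact (mul_le_of_le_one_left (abs_nonneg _) hσ).trans (hA 0)
  | succ k => exact hA k

lemma abs_offDiag_le {M : ℝ} {A : ℕ → ℝ} (hnext : |A (k + 1)| ≤ M)
    (hprev : |reflectedPrev σ A k| ≤ M) :
    |offDiag α β σ A k| ≤ coupling α β * (k + 1) * M := by
  have hM : 0 ≤ M := (abs_nonneg _).trans hnext
  calc |offDiag α β σ A k|
      ≤ |upper α β k| * |A (k + 1)| + |lower α β k| * |reflectedPrev σ A k| := by
        rw [offDiag_apply, ← abs_mul, ← abs_mul]; exact abs_add_le _ _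
    _ ≤ |upper α β k| * M + |lower α β k| * M := by gcongr
    _ ≤ coupling α β * (k + 1) * M := by
        nlinarith [two_mul_abs_upper_le α β k, two_mul_abs_lower_le α β k]

lemma abs_offDiag_le_norm (hσ : |σ| ≤ 1) (A : ℕ →ᵇ ℝ) (k : ℕ) :
    |offDiag α β σ A k| ≤ coupling α β * (k + 1) * ‖A‖ :=
  abs_offDiag_le (A.norm_coe_le_norm _) (abs_reflectedPrev_le hσ A.norm_coe_le_norm k)

lemma offDiag_smul (r : ℝ) (A : ℕ →ᵇ ℝ) :
    offDiag α β σ ⇑(r • A) = r • offDiag α β σ A :=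
  map_smul (offDiag α β σ) r ⇑A

lemma norm_le_of_forall_abs_le_add {r : ℝ} {A : ℕ →ᵇ ℝ} (h : ∀ k, |A k| ≤ r + ‖A‖ / 2) :
    ‖A‖ ≤ 2 * r := by
  have := (A.norm_le ((abs_nonneg _).trans (h 0))).2 h
  linarith

lemma norm_le_of_approx_solution {L r : ℝ} {w : ℕ → ℝ} {A : ℕ →ᵇ ℝ} (hσ : |σ| ≤ 1)
    (hL : L * coupling α β ≤ 1 / 2)
    (h : ∀ k, |A k| ≤ r ∨
      (k + 1 : ℝ) ≤ L * |w k| ∧ |w k * A k - offDiag α β σ A k| ≤ r * |w k|) :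
    ‖A‖ ≤ 2 * r := by
  refine norm_le_of_forall_abs_le_add fun k => ?_
  obtain h | ⟨hw, hA⟩ := h k
  · linarith [norm_nonneg A]
  have hw_pos : 0 < |w k| := by
    refine (abs_nonneg _).lt_of_ne' fun h0 => ?_
    rw [h0, mul_zero] at hw
    exact absurd hw (not_le.2 (by positivity))
  refine le_of_mul_le_mul_left ?_ hw_pos
  calc |w k| * |A k| = |w k * A k| := (abs_mul _ _).symm
    _ ≤ r * |w k| + coupling α β * (k + 1) * ‖A‖ := by
        linarith [abs_sub_abs_le_abs_sub (w k * A k) (offDiag α β σ A k),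
          abs_offDiag_le_norm (α := α) (β := β) hσ A k]
    _ ≤ r * |w k| + coupling α β * (L * |w k|) * ‖A‖ := by
        have := coupling_nonneg α β
        gcongr
    _ = r * |w k| + L * coupling α β * (|w k| * ‖A‖) := by ring
    _ ≤ r * |w k| + 1 / 2 * (|w k| * ‖A‖) := by gcongr
    _ = |w k| * (r + ‖A‖ / 2) := by ring

lemma add_one_le_abs_oddSq_sub (hμ : |μ - oddSq j| ≤ 1) (hk : k ≠ j) :
    (k : ℝ) + 1 ≤ |oddSq k - μ| := by
  obtain ⟨h₁, h₂⟩ := abs_le.1 hμ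
  have : (0 : ℝ) ≤ k := k.cast_nonneg
  have : (0 : ℝ) ≤ j := j.cast_nonneg
  unfold oddSq at *
  rcases hk.lt_or_gt with h | h
  · have : (k : ℝ) + 1 ≤ j := by exact_mod_cast h
    rw [abs_of_nonpos (by nlinarith)]
    nlinarith
  · have : (j : ℝ) + 1 ≤ k := by exact_mod_cast h
    rw [abs_of_nonneg (by nlinarith)]
    nlinarith

/-- `A` is the bounded sequence with `A j = 1` that solves all equations but the `j`-th, for a
spectral parameter `μ` near `oddSq j`. -/
structure IsNormalized (α β σ : ℝ) (j : ℕ) (μ : ℝ) (A : ℕ →ᵇ ℝ) : Prop where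
  near : |μ - oddSq j| ≤ 1
  apply_self : A j = 1
  eqn : ∀ k, k ≠ j → (oddSq k - μ) * A k = offDiag α β σ A k

/-- `A` is a bounded solution of the whole system with `A j = 1`, for a spectral parameter `μ` near
`oddSq j`. -/
structure IsEigenpair (α β σ : ℝ) (j : ℕ) (μ : ℝ) (A : ℕ →ᵇ ℝ) : Prop
    extends IsNormalized α β σ j μ A where
  eqn_self : oddSq j - μ = offDiag α β σ A j

lemma IsEigenpair.eqn_all {A : ℕ →ᵇ ℝ} (hA : IsEigenpair α β σ j μ A) (k : ℕ) :
    (oddSq k - μ) * A k = offDiag α β σ A k := by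
  rcases eq_or_ne k j with rfl | hk
  · rw [hA.apply_self, mul_one, hA.eqn_self]
  · exact hA.eqn k hk

lemma IsNormalized.norm_le_two {A : ℕ →ᵇ ℝ} (hσ : |σ| ≤ 1) (hκ : coupling α β ≤ 1 / 2)
    (hA : IsNormalized α β σ j μ A) : ‖A‖ ≤ 2 := by
  refine (norm_le_of_approx_solution (r := 1) (w := fun k => oddSq k - μ) hσ
    (by rwa [one_mul]) fun k => ?_).trans_eq (mul_one 2)
  rcases eq_or_ne k j with rfl | hk
  · left; simp [hA.apply_self]
  · right
    rw [hA.eqn k hk, one_mul, sub_self, abs_zero]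
    exact ⟨add_one_le_abs_oddSq_sub hA.near hk, abs_nonneg _⟩

lemma IsNormalized.abs_apply_le {A : ℕ →ᵇ ℝ} (hσ : |σ| ≤ 1) (hκ : coupling α β ≤ 1 / 2)
    (hA : IsNormalized α β σ j μ A) (hk : k ≠ j) : |A k| ≤ 2 * coupling α β := by
  have hgap := add_one_le_abs_oddSq_sub hA.near hk
  have hoff := abs_offDiag_le_norm (α := α) (β := β) hσ A k
  rw [← hA.eqn k hk, abs_mul] at hoff
  have hκ₀ := coupling_nonneg α β
  refine le_of_mul_le_mul_left ?_ (by positivity : (0 : ℝ) < k + 1)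
  calc ((k : ℝ) + 1) * |A k| ≤ |oddSq k - μ| * |A k| := by gcongr
    _ ≤ coupling α β * (k + 1) * ‖A‖ := hoff
    _ ≤ coupling α β * (k + 1) * 2 := by gcongr; exact hA.norm_le_two hσ hκ
    _ = (k + 1) * (2 * coupling α β) := by ring

lemma IsNormalized.norm_sub_le {A A' : ℕ →ᵇ ℝ} (hσ : |σ| ≤ 1) (hκ : coupling α β ≤ 1 / 2)
    (hA : IsNormalized α β σ j μ A) (hA' : IsNormalized α β σ j μ' A') :
    ‖A - A'‖ ≤ 4 * coupling α β * |μ - μ'| := by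
  have hκ₀ := coupling_nonneg α β
  refine (norm_le_of_approx_solution (r := 2 * coupling α β * |μ - μ'|)
    (w := fun k => oddSq k - μ) hσ (by rwa [one_mul]) fun k => ?_).trans_eq (by ring)
  rcases eq_or_ne k j with rfl | hk
  · left
    rw [BoundedContinuousFunction.coe_sub, Pi.sub_apply, hA.apply_self, hA'.apply_self, sub_self,
      abs_zero]
    positivity
  right
  have hgap := add_one_le_abs_oddSq_sub hA.near hk
  have residual : (oddSq k - μ) * (A - A') k - offDiag α β σ ⇑(A - A') k = (μ - μ') * A' k := by
    rw [BoundedContinuousFunction.coe_sub, map_sub, Pi.sub_apply, Pi.sub_apply, ← hA.eqn k hk,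
      ← hA'.eqn k hk]
    ring
  refine ⟨by rwa [one_mul], ?_⟩
  rw [residual, abs_mul]
  calc |μ - μ'| * |A' k| ≤ |μ - μ'| * (2 * coupling α β) * 1 := by
        rw [mul_one]; gcongr; exact hA'.abs_apply_le hσ hκ hk
    _ ≤ |μ - μ'| * (2 * coupling α β) * |oddSq k - μ| := by
        gcongr; linarith [(Nat.cast_nonneg k : (0 : ℝ) ≤ k)]
    _ = 2 * coupling α β * |μ - μ'| * |oddSq k - μ| := by ring

lemma eq_zero_of_solution_near {A : ℕ →ᵇ ℝ} (hσ : |σ| ≤ 1) (hκ : coupling α β ≤ 1 / 2)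
    (hμ : |μ - oddSq j| ≤ 1) (hj : A j = 0)
    (hA : ∀ k, (oddSq k - μ) * A k = offDiag α β σ A k) : A = 0 := by
  have : ‖A‖ ≤ 2 * 0 := by
    refine norm_le_of_approx_solution (w := fun k => oddSq k - μ) hσ (by rwa [one_mul]) fun k => ?_
    rcases eq_or_ne k j with rfl | hk
    · left; rw [hj, abs_zero]
    · right
      rw [hA k, sub_self, abs_zero, zero_mul, one_mul]
      exact ⟨add_one_le_abs_oddSq_sub hμ hk, le_rfl⟩
  rwa [mul_zero, norm_le_zero_iff] at this

lemma eq_zero_of_solution_away {m : ℕ} {A : ℕ →ᵇ ℝ} (hσ : |σ| ≤ 1)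
    (hκ : (m + 1) * coupling α β ≤ 1 / 2) (hle : μ ≤ oddSq m + 1)
    (hμ : ∀ k ≤ m, 1 < |μ - oddSq k|)
    (hA : ∀ k, (oddSq k - μ) * A k = offDiag α β σ A k) : A = 0 := by
  have : ‖A‖ ≤ 2 * 0 := by
    refine norm_le_of_approx_solution (w := fun k => oddSq k - μ) hσ hκ fun k => Or.inr ?_
    rw [hA k, sub_self, abs_zero, zero_mul]
    refine ⟨?_, le_rfl⟩
    have : (0 : ℝ) ≤ m := m.cast_nonneg
    rcases le_or_gt k m with hk | hk
    · have h₁ := hμ k hk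
      rw [abs_sub_comm] at h₁
      have : (k : ℝ) ≤ m := by exact_mod_cast hk
      nlinarith
    · have h₁ : (m : ℝ) + 1 ≤ k := by exact_mod_cast hk
      have h₂ : (k : ℝ) + 1 ≤ oddSq k - μ := by unfold oddSq at *; nlinarith
      nlinarith [le_abs_self (oddSq k - μ)]
  rwa [mul_zero, norm_le_zero_iff] at this

lemma exists_reduced_resolvent (hσ : |σ| ≤ 1) (hμ : |μ - oddSq j| ≤ 1) :
    ∃ S : (ℕ →ᵇ ℝ) →L[ℝ] (ℕ →ᵇ ℝ), ‖S‖ ≤ coupling α β ∧ ∀ A : ℕ →ᵇ ℝ, ∀ k,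
      S A k = if k = j then 0 else offDiag α β σ A k / (oddSq k - μ) := by
  have hκ₀ := coupling_nonneg α β
  have hbound : ∀ (A : ℕ →ᵇ ℝ) k,
      ‖if k = j then 0 else offDiag α β σ A k / (oddSq k - μ)‖ ≤ coupling α β * ‖A‖ := by
    intro A k
    split_ifs with hk
    · rw [norm_zero]; positivity
    have hgap := add_one_le_abs_oddSq_sub hμ hk
    have hgap_pos : 0 < |oddSq k - μ| := lt_of_lt_of_le (by positivity) hgap
    rw [norm_div, Real.norm_eq_abs, Real.norm_eq_abs, div_le_iff₀ hgap_pos]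
    calc |offDiag α β σ A k| ≤ coupling α β * (k + 1) * ‖A‖ := abs_offDiag_le_norm hσ A k
      _ ≤ coupling α β * |oddSq k - μ| * ‖A‖ := by gcongr
      _ = coupling α β * ‖A‖ * |oddSq k - μ| := by ring
  let S : (ℕ →ᵇ ℝ) →ₗ[ℝ] (ℕ →ᵇ ℝ) :=
    { toFun := fun A => BoundedContinuousFunction.ofNormedAddCommGroupDiscrete _ _ (hbound A)
      map_add' := fun A A' => by
        ext k
        by_cases hk : k = j <;> simp [hk, add_div]
      map_smul' := fun r A => by
        ext k
        by_cases hk : k = j <;>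
          simp only [hk, offDiag_smul, mul_div_assoc, if_true, if_false, smul_eq_mul, mul_zero,
            Pi.smul_apply, RingHom.id_apply, BoundedContinuousFunction.smul_apply,
            BoundedContinuousFunction.coe_ofNormedAddCommGroupDiscrete] }
  refine ⟨S.mkContinuous (coupling α β) fun A => ?_,
    LinearMap.mkContinuous_norm_le _ hκ₀ _, fun _ _ => rfl⟩
  exact (BoundedContinuousFunction.norm_le (by positivity)).2 (hbound A)

lemma exists_isNormalized (hσ : |σ| ≤ 1) (hκ : coupling α β ≤ 1 / 2) (hμ : |μ - oddSq j| ≤ 1) :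
    ∃ A, IsNormalized α β σ j μ A := by
  obtain ⟨S, hS, hS_apply⟩ := exists_reduced_resolvent (α := α) (β := β) hσ hμ
  let e : ℕ →ᵇ ℝ := BoundedContinuousFunction.ofNormedAddCommGroupDiscrete
    (fun k => if k = j then 1 else 0) 1 fun k => by split_ifs <;> simp
  let T := Units.oneSub S (by linarith)
  have fixed : ∀ k, (↑T⁻¹ : (ℕ →ᵇ ℝ) →L[ℝ] (ℕ →ᵇ ℝ)) e k
      - S ((↑T⁻¹ : (ℕ →ᵇ ℝ) →L[ℝ] (ℕ →ᵇ ℝ)) e) k = if k = j then 1 else 0 := fun k =>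
    DFunLike.congr_fun (DFunLike.congr_fun T.mul_inv e) k
  set A := (↑T⁻¹ : (ℕ →ᵇ ℝ) →L[ℝ] (ℕ →ᵇ ℝ)) e
  refine ⟨A, hμ, ?_, fun k hk => ?_⟩
  · simpa [hS_apply] using fixed j
  · have hgap := add_one_le_abs_oddSq_sub hμ hk
    have hne : oddSq k - μ ≠ 0 := abs_pos.1 (lt_of_lt_of_le (by positivity) hgap)
    have h := fixed k
    rw [hS_apply, if_neg hk, if_neg hk, sub_eq_zero, eq_div_iff hne] at h
    rw [← h, mul_comm]

lemma IsNormalized.abs_offDiag_sub_le {A A' : ℕ →ᵇ ℝ} (hσ : |σ| ≤ 1) (hκ : coupling α β ≤ 1 / 2)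
    (hA : IsNormalized α β σ j μ A) (hA' : IsNormalized α β σ j μ' A') :
    |offDiag α β σ A j - offDiag α β σ A' j|
      ≤ 4 * coupling α β ^ 2 * (j + 1) * |μ - μ'| := by
  have hκ₀ := coupling_nonneg α β
  have h := abs_offDiag_le_norm (α := α) (β := β) hσ (A - A') j
  rw [BoundedContinuousFunction.coe_sub, map_sub, Pi.sub_apply] at h
  calc _ ≤ _ := h
    _ ≤ coupling α β * (j + 1) * (4 * coupling α β * |μ - μ'|) := by
        gcongr; exact hA.norm_sub_le hσ hκ hA'
    _ = _ := by ring

lemma coupling_le_of_small (hsmall : 8 * coupling α β * (j + 1) ≤ 1) : coupling α β ≤ 1 / 8 := by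
  nlinarith [coupling_nonneg α β, (Nat.cast_nonneg j : (0 : ℝ) ≤ j)]

lemma four_mul_coupling_sq_le (hsmall : 8 * coupling α β * (j + 1) ≤ 1) :
    4 * coupling α β ^ 2 * (j + 1) ≤ 1 / 2 := by
  nlinarith [coupling_nonneg α β, coupling_le_of_small hsmall]

-- Intermediate value theorem for the `j`-th equation `oddSq j - μ = offDiag (A μ) j`, where `A μ`
-- is the normalized solution of the other ones.
lemma exists_isEigenpair (hσ : |σ| ≤ 1) (hsmall : 8 * coupling α β * (j + 1) ≤ 1) :
    ∃ μ A, IsEigenpair α β σ j μ A := by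
  have hκ : coupling α β ≤ 1 / 2 := by linarith [coupling_le_of_small hsmall]
  let I := Set.Icc (oddSq j - 1) (oddSq j + 1)
  have exists_A : ∀ μ, ∃ A, μ ∈ I → IsNormalized α β σ j μ A := fun μ => by
    by_cases hμ : |μ - oddSq j| ≤ 1
    · exact (exists_isNormalized hσ hκ hμ).imp fun _ h _ => h
    · exact ⟨0, fun h => absurd (abs_le.2 ⟨by linarith [h.1], by linarith [h.2]⟩) hμ⟩
  choose A hA using exists_A
  have offDiag_lip : LipschitzOnWith 1 (fun μ => offDiag α β σ (A μ) j) I := by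
    refine LipschitzOnWith.of_dist_le_mul fun x hx y hy => ?_
    rw [Real.dist_eq, Real.dist_eq]
    refine ((hA x hx).abs_offDiag_sub_le hσ hκ (hA y hy)).trans ?_
    gcongr
    linarith [four_mul_coupling_sq_le hsmall, NNReal.coe_one]
  have offDiag_le : ∀ μ ∈ I, |offDiag α β σ (A μ) j| ≤ 1 := fun μ hμ => by
    refine (abs_offDiag_le_norm hσ (A μ) j).trans ?_
    have := coupling_nonneg α β
    calc _ ≤ coupling α β * (j + 1) * 2 := by gcongr; exact (hA μ hμ).norm_le_two hσ hκ
      _ ≤ 1 := by linarith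
  have hI : oddSq j - 1 ≤ oddSq j + 1 := by linarith
  obtain ⟨μ, hμ, hμ_eq⟩ := intermediate_value_Icc hI (continuousOn_id.add offDiag_lip.continuousOn)
    (show oddSq j ∈ Set.Icc _ _ from
      ⟨by simpa [sub_add_eq_add_sub] using (abs_le.1 (offDiag_le _ (Set.left_mem_Icc.2 hI))).2,
       by simpa [add_assoc, ← neg_le_iff_add_nonneg'] using
          (abs_le.1 (offDiag_le _ (Set.right_mem_Icc.2 hI))).1⟩)
  exact ⟨μ, A μ, hA μ hμ, sub_eq_of_eq_add' hμ_eq.symm⟩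

lemma IsEigenpair.unique {A A' : ℕ →ᵇ ℝ} (hσ : |σ| ≤ 1)
    (hsmall : 8 * coupling α β * (j + 1) ≤ 1)
    (hA : IsEigenpair α β σ j μ A) (hA' : IsEigenpair α β σ j μ' A') : μ = μ' := by
  have hκ : coupling α β ≤ 1 / 2 := by linarith [coupling_le_of_small hsmall]
  have h := hA.toIsNormalized.abs_offDiag_sub_le hσ hκ hA'.toIsNormalized
  rw [← hA.eqn_self, ← hA'.eqn_self, sub_sub_sub_cancel_left, abs_sub_comm] at h
  have : |μ - μ'| ≤ 0 := by
    nlinarith [abs_nonneg (μ - μ'), four_mul_coupling_sq_le hsmall]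
  exact sub_eq_zero.1 (abs_nonpos_iff.1 this)

lemma IsEigenpair.apply_eq_zero_of_ne {A A' : ℕ →ᵇ ℝ} (hσ : |σ| ≤ 1)
    (hsmall : 8 * coupling α β * (j + 1) ≤ 1) (hA : IsEigenpair α β σ j μ A)
    (hμ' : |μ' - oddSq j| ≤ 1) (hA' : ∀ k, (oddSq k - μ') * A' k = offDiag α β σ A' k)
    (hne : μ' ≠ μ) : A' j = 0 := by
  by_contra h₀
  have scaled : ∀ k, (oddSq k - μ') * ((A' j)⁻¹ • A') k = offDiag α β σ ⇑((A' j)⁻¹ • A') k := by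
    intro k
    rw [offDiag_smul, Pi.smul_apply, BoundedContinuousFunction.smul_apply, ← hA' k, smul_eq_mul,
      smul_eq_mul]
    ring
  have apply_self : ((A' j)⁻¹ • A') j = 1 := by simp [h₀]
  refine hne (IsEigenpair.unique (A := (A' j)⁻¹ • A') hσ hsmall
    ⟨⟨hμ', apply_self, fun k _ => scaled k⟩, ?_⟩ hA)
  rw [← scaled j, apply_self, mul_one]

lemma IsEigenpair.abs_sub_oddSq_le {A : ℕ →ᵇ ℝ} (hσ : |σ| ≤ 1) (hκ : coupling α β ≤ 1 / 2)
    (hj : j ≠ 0) (hA : IsEigenpair α β σ j μ A) :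
    |μ - oddSq j| ≤ 2 * (j + 1) * coupling α β ^ 2 := by
  obtain ⟨i, rfl⟩ := Nat.exists_eq_succ_of_ne_zero hj
  rw [abs_sub_comm, hA.eqn_self]
  calc _ ≤ coupling α β * ((i.succ : ℕ) + 1) * (2 * coupling α β) :=
        abs_offDiag_le (hA.abs_apply_le hσ hκ (by simp))
          (hA.abs_apply_le hσ hκ i.lt_succ_self.ne)
    _ = _ := by ring

end TridiagonalSystem

section Splitting

/-- The `k`-th leading principal minor of the tridiagonal system, as a function of the spectral
parameter `μ`. -/
def leadingMinor (α β σ μ : ℝ) : ℕ → ℝ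
  | 0 => 1
  | 1 => oddSq 0 - μ - σ * β
  | k + 2 => (oddSq (k + 1) - μ) * leadingMinor α β σ μ (k + 1)
      - upper α β k * lower α β (k + 1) * leadingMinor α β σ μ k

/-- The leading term of the signed distance between the two semi-periodic eigenvalues that emerge
from `oddSq j`. -/
def leadingGap (α β : ℝ) (j : ℕ) : ℝ :=
  2 * β * (∏ k ∈ Finset.range j, upper α β k * lower α β (k + 1)) /
    (∏ k ∈ Finset.range j, (oddSq k - oddSq j)) ^ 2

variable {α β σ σ' μ μ' : ℝ} {j k : ℕ}

lemma leadingMinor_succ_succ (α β σ μ : ℝ) (k : ℕ) :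
    leadingMinor α β σ μ (k + 2) = (oddSq (k + 1) - μ) * leadingMinor α β σ μ (k + 1)
      - upper α β k * lower α β (k + 1) * leadingMinor α β σ μ k := rfl

lemma leadingMinor_casoratian (α β μ : ℝ) (k : ℕ) :
    leadingMinor α β 1 μ k * leadingMinor α β (-1) μ (k + 1)
      - leadingMinor α β (-1) μ k * leadingMinor α β 1 μ (k + 1) =
    2 * β * ∏ i ∈ Finset.range k, upper α β i * lower α β (i + 1) := by
  induction k with
  | zero => simp [leadingMinor]; ring
  | succ k ih =>
    rw [Finset.prod_range_succ, leadingMinor_succ_succ, leadingMinor_succ_succ]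
    linear_combination (upper α β k * lower α β (k + 1)) * ih

lemma IsNormalized.upper_mul_leadingMinor {A : ℕ →ᵇ ℝ} (hA : IsNormalized α β σ j μ A)
    (hk : k < j) :
    upper α β k * leadingMinor α β σ μ k * A (k + 1) = leadingMinor α β σ μ (k + 1) * A k := by
  induction k with
  | zero =>
    have h := hA.eqn 0 hk.ne
    simp only [offDiag_apply, reflectedPrev_zero, lower, Nat.cast_zero, mul_zero, sub_zero] at h
    simp only [leadingMinor]
    linear_combination -h
  | succ k ih =>
    have h := hA.eqn (k + 1) hk.ne
    rw [offDiag_apply, reflectedPrev_succ] at h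
    rw [leadingMinor_succ_succ]
    linear_combination (-leadingMinor α β σ μ (k + 1)) * h
      + lower α β (k + 1) * ih (k.lt_succ_self.trans hk)

-- The difference, cut off to the left of `j`, solves the equations off `j`: the row `j` decouples
-- the two sides because both sequences equal one there.
lemma IsNormalized.apply_eq_of_le {A A' : ℕ →ᵇ ℝ} (hκ : coupling α β ≤ 1 / 2)
    (hA : IsNormalized α β σ j μ A) (hA' : IsNormalized α β σ' j μ A') (hk : j ≤ k) :
    A k = A' k := by
  let D : ℕ →ᵇ ℝ := .ofNormedAddCommGroupDiscrete
    (fun k => if j ≤ k then (A - A') k else 0) ‖A - A'‖ fun k => by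
      split_ifs
      · exact (A - A').norm_coe_le_norm k
      · simp
  have D_right : ∀ k, j ≤ k → D k = A k - A' k := fun k hk => if_pos hk
  have D_left : ∀ k, k ≤ j → D k = 0 := fun k hk => by
    rcases hk.lt_or_eq with hk | rfl
    · exact if_neg hk.not_ge
    · rw [D_right k le_rfl, hA.apply_self, hA'.apply_self, sub_self]
  have D_norm : ‖D‖ ≤ 2 * 0 := by
    refine norm_le_of_approx_solution (α := α) (β := β) (σ := 0) (w := fun k => oddSq k - μ)
      (by simp) (by rwa [one_mul]) fun k => ?_
    rcases lt_trichotomy k j with hk | rfl | hk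
    · left; rw [D_left k hk.le, abs_zero]
    · left; rw [D_left k le_rfl, abs_zero]
    · right
      refine ⟨by rw [one_mul]; exact add_one_le_abs_oddSq_sub hA.near hk.ne', ?_⟩
      obtain ⟨i, rfl⟩ := Nat.exists_eq_succ_of_ne_zero (Nat.ne_zero_of_lt hk)
      have h := hA.eqn (i + 1) hk.ne'
      have h' := hA'.eqn (i + 1) hk.ne'
      simp only [offDiag_apply, Nat.succ_eq_add_one, reflectedPrev_succ] at h h' ⊢
      rw [D_right (i + 1) hk.le, D_right (i + 1 + 1) (by omega), D_right i (by omega), zero_mul,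
        abs_nonpos_iff]
      linear_combination h - h'
  rw [mul_zero, norm_le_zero_iff] at D_norm
  rw [← sub_eq_zero, ← D_right k hk, D_norm, BoundedContinuousFunction.coe_zero, Pi.zero_apply]

lemma IsNormalized.leadingMinor_mul_offDiag_sub {A A' : ℕ →ᵇ ℝ} (hκ : coupling α β ≤ 1 / 2)
    (hA : IsNormalized α β 1 j μ A) (hA' : IsNormalized α β (-1) j μ A') :
    leadingMinor α β 1 μ j * leadingMinor α β (-1) μ j *
      (offDiag α β 1 A j - offDiag α β (-1) A' j) =
    2 * β * ∏ k ∈ Finset.range j, upper α β k * lower α β (k + 1) := by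
  have tail : A (j + 1) = A' (j + 1) := hA.apply_eq_of_le hκ hA' j.le_succ
  simp only [offDiag_apply, tail]
  rcases j with _ | j
  · simp only [reflectedPrev_zero, hA.apply_self, hA'.apply_self, leadingMinor, lower,
      Finset.range_zero, Finset.prod_empty]
    push_cast
    ring
  · have h := hA.upper_mul_leadingMinor j.lt_succ_self
    have h' := hA'.upper_mul_leadingMinor j.lt_succ_self
    rw [hA.apply_self] at h
    rw [hA'.apply_self] at h'
    rw [Finset.prod_range_succ, reflectedPrev_succ, reflectedPrev_succ]
    linear_combination (lower α β (j + 1) * upper α β j) * leadingMinor_casoratian α β μ j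
      - lower α β (j + 1) * leadingMinor α β (-1) μ (j + 1) * h
      + lower α β (j + 1) * leadingMinor α β 1 μ (j + 1) * h'

lemma IsEigenpair.abs_sub_sub_div_leadingMinor_le {A A' : ℕ →ᵇ ℝ} (hκ : coupling α β ≤ 1 / 2)
    (hA : IsEigenpair α β 1 j μ A) (hA' : IsEigenpair α β (-1) j μ' A')
    (hW : leadingMinor α β 1 μ' j * leadingMinor α β (-1) μ' j ≠ 0) :
    |μ' - μ - (2 * β * ∏ k ∈ Finset.range j, upper α β k * lower α β (k + 1)) /
        (leadingMinor α β 1 μ' j * leadingMinor α β (-1) μ' j)|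
      ≤ 4 * coupling α β ^ 2 * (j + 1) * |μ - μ'| := by
  obtain ⟨A₁, hA₁⟩ := exists_isNormalized (α := α) (β := β) (abs_one.le : |(1 : ℝ)| ≤ 1) hκ hA'.near
  rw [← hA₁.leadingMinor_mul_offDiag_sub hκ hA'.toIsNormalized, mul_div_cancel_left₀ _ hW]
  convert hA.toIsNormalized.abs_offDiag_sub_le abs_one.le hκ hA₁ using 2
  linear_combination hA.eqn_self - hA'.eqn_self

end Splitting

section SplittingAsymptotics

variable {ι : Type*} {l : Filter ι} {α β μ μ' : ι → ℝ} {j : ℕ}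

lemma upper_isBigO (l : Filter ι) (α β : ι → ℝ) (k : ℕ) :
    (fun i => upper (α i) (β i) k) =O[l] fun i => coupling (α i) (β i) := by
  refine .of_bound (k + 1) (.of_forall fun i => ?_)
  rw [norm_eq_abs, norm_eq_abs, abs_of_nonneg (coupling_nonneg _ _), mul_comm]
  linarith [two_mul_abs_upper_le (α i) (β i) k, abs_nonneg (upper (α i) (β i) k)]

lemma lower_isBigO (l : Filter ι) (α β : ι → ℝ) (k : ℕ) :
    (fun i => lower (α i) (β i) k) =O[l] fun i => coupling (α i) (β i) := by
  refine .of_bound (k + 1) (.of_forall fun i => ?_)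
  rw [norm_eq_abs, norm_eq_abs, abs_of_nonneg (coupling_nonneg _ _), mul_comm]
  linarith [two_mul_abs_lower_le (α i) (β i) k, abs_nonneg (lower (α i) (β i) k)]

lemma isBigO_coupling (l : Filter ι) (α β : ι → ℝ) :
    β =O[l] fun i => coupling (α i) (β i) := by
  simpa [lower] using lower_isBigO l α β 0

lemma upper_mul_lower_isBigO (l : Filter ι) (α β : ι → ℝ) (k : ℕ) :
    (fun i => upper (α i) (β i) k * lower (α i) (β i) (k + 1))
      =O[l] fun i => coupling (α i) (β i) ^ 2 := by
  simpa only [pow_two] using (upper_isBigO l α β k).mul (lower_isBigO l α β (k + 1))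

lemma oddSq_sub_isBigO_one (hμ : Tendsto μ l (𝓝 (oddSq j))) (k : ℕ) :
    (fun i => oddSq k - μ i) =O[l] fun _ => (1 : ℝ) :=
  (tendsto_const_nhds.sub hμ).isBigO_one ℝ

lemma leadingMinor_sub_isBigO (hκ : Tendsto (fun i => coupling (α i) (β i)) l (𝓝 0))
    (hμ : Tendsto μ l (𝓝 (oddSq j))) (k : ℕ) :
    (fun i => leadingMinor (α i) (β i) 1 (μ i) k - leadingMinor (α i) (β i) (-1) (μ i) k)
      =O[l] fun i => coupling (α i) (β i) := by
  induction k using Nat.twoStepInduction with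
  | zero => simp [leadingMinor, isBigO_zero]
  | one =>
    refine ((isBigO_coupling l α β).const_mul_left (-2)).congr_left fun i => ?_
    simp only [leadingMinor]; ring
  | more k ih₀ ih₁ =>
    have h₁ := (oddSq_sub_isBigO_one hμ (k + 1)).mul ih₁
    have h₀ := (((upper_mul_lower_isBigO l α β k).trans
      ((hκ.pow 2).isBigO_one ℝ)).mul ih₀)
    simp only [one_mul] at h₀ h₁
    refine (h₁.sub h₀).congr_left fun i => ?_
    simp only [leadingMinor_succ_succ]; ring

lemma leadingMinor_add_sub_isBigO (hκ : Tendsto (fun i => coupling (α i) (β i)) l (𝓝 0))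
    (hμ : (fun i => μ i - oddSq j) =O[l] fun i => coupling (α i) (β i) ^ 2) (k : ℕ) :
    (fun i => leadingMinor (α i) (β i) 1 (μ i) k + leadingMinor (α i) (β i) (-1) (μ i) k
      - 2 * ∏ r ∈ Finset.range k, (oddSq r - oddSq j)) =O[l] fun i => coupling (α i) (β i) ^ 2 := by
  have hκ_sq : (fun i => coupling (α i) (β i) ^ 2) =O[l] fun _ => (1 : ℝ) :=
    (hκ.pow 2).isBigO_one ℝ
  have hμ_lim : Tendsto μ l (𝓝 (oddSq j)) :=
    tendsto_sub_nhds_zero_iff.1 (hμ.trans_tendsto (by simpa using hκ.pow 2))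
  induction k using Nat.twoStepInduction with
  | zero => norm_num [leadingMinor, isBigO_zero]
  | one =>
    refine (hμ.const_mul_left (-2)).congr_left fun i => ?_
    rw [Finset.prod_range_one]
    simp only [leadingMinor]; ring
  | more k ih₀ ih₁ =>
    have h₁ := (oddSq_sub_isBigO_one hμ_lim (k + 1)).mul ih₁
    have h₀ := (upper_mul_lower_isBigO l α β k).mul ((ih₀.trans hκ_sq).add
      (isBigO_const_const (2 * ∏ r ∈ Finset.range k, (oddSq r - oddSq j)) one_ne_zero l))
    simp only [one_mul, mul_one] at h₀ h₁
    refine ((h₁.sub h₀).sub (hμ.const_mul_left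
      (2 * ∏ r ∈ Finset.range (k + 1), (oddSq r - oddSq j)))).congr_left fun i => ?_
    simp only [leadingMinor_succ_succ, Finset.prod_range_succ _ (k + 1)]; ring

lemma leadingMinor_mul_sub_isBigO (hκ : Tendsto (fun i => coupling (α i) (β i)) l (𝓝 0))
    (hμ : (fun i => μ i - oddSq j) =O[l] fun i => coupling (α i) (β i) ^ 2) (k : ℕ) :
    (fun i => leadingMinor (α i) (β i) 1 (μ i) k * leadingMinor (α i) (β i) (-1) (μ i) k
      - (∏ r ∈ Finset.range k, (oddSq r - oddSq j)) ^ 2)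
      =O[l] fun i => coupling (α i) (β i) ^ 2 := by
  have hμ_lim : Tendsto μ l (𝓝 (oddSq j)) :=
    tendsto_sub_nhds_zero_iff.1 (hμ.trans_tendsto (by simpa using hκ.pow 2))
  set P := ∏ r ∈ Finset.range k, (oddSq r - oddSq j)
  have hsum := leadingMinor_add_sub_isBigO hκ hμ k
  have hdiff := (leadingMinor_sub_isBigO hκ hμ_lim k).pow 2
  have hsum' := ((hsum.trans ((hκ.pow 2).isBigO_one ℝ)).add
    (isBigO_const_const (4 * P) one_ne_zero l)).mul hsum
  simp only [one_mul] at hsum'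
  refine ((hsum'.sub hdiff).const_mul_left (1 / 4)).congr_left fun i => ?_
  ring

lemma prod_oddSq_sub_ne_zero (j : ℕ) : ∏ k ∈ Finset.range j, (oddSq k - oddSq j) ≠ 0 := by
  refine Finset.prod_ne_zero_iff.2 fun k hk => sub_ne_zero.2 (ne_of_lt ?_)
  have : (k : ℝ) < j := by exact_mod_cast Finset.mem_range.1 hk
  unfold oddSq
  gcongr

lemma leadingGap_numerator_isBigO (l : Filter ι) (α β : ι → ℝ) (j : ℕ) :
    (fun i => 2 * β i * ∏ k ∈ Finset.range j, upper (α i) (β i) k * lower (α i) (β i) (k + 1))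
      =O[l] fun i => coupling (α i) (β i) ^ (2 * j + 1) := by
  refine (((isBigO_coupling l α β).const_mul_left 2).mul (IsBigO.finsetProd
    fun k _ => upper_mul_lower_isBigO l α β k)).congr_right fun i => ?_
  rw [Finset.prod_const, Finset.card_range, ← pow_mul, pow_succ']

lemma leadingMinor_mul_sub_isBigO_of_isEigenpair {σ : ℝ} (hσ : |σ| ≤ 1)
    (hκ : Tendsto (fun i => coupling (α i) (β i)) l (𝓝 0))
    (h : ∀ᶠ i in l, ∃ A, IsEigenpair (α i) (β i) σ j (μ i) A) :
    (fun i => leadingMinor (α i) (β i) 1 (μ i) j * leadingMinor (α i) (β i) (-1) (μ i) j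
      - (∏ r ∈ Finset.range j, (oddSq r - oddSq j)) ^ 2)
      =O[l] fun i => coupling (α i) (β i) ^ 2 := by
  rcases eq_or_ne j 0 with rfl | hj
  · simp [leadingMinor, isBigO_zero]
  refine leadingMinor_mul_sub_isBigO hκ (.of_bound (2 * (j + 1)) ?_) j
  filter_upwards [h, hκ.eventually_le_const (by norm_num : (0 : ℝ) < 1 / 2)] with i ⟨A, hA⟩ hi
  rw [norm_eq_abs, norm_eq_abs, abs_of_nonneg (sq_nonneg (coupling _ _))]
  exact hA.abs_sub_oddSq_le hσ hi hj

lemma leadingMinor_mul_tendsto {σ : ℝ} (hσ : |σ| ≤ 1)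
    (hκ : Tendsto (fun i => coupling (α i) (β i)) l (𝓝 0))
    (h : ∀ᶠ i in l, ∃ A, IsEigenpair (α i) (β i) σ j (μ i) A) :
    Tendsto (fun i => leadingMinor (α i) (β i) 1 (μ i) j * leadingMinor (α i) (β i) (-1) (μ i) j) l
      (𝓝 ((∏ r ∈ Finset.range j, (oddSq r - oddSq j)) ^ 2)) :=
  tendsto_sub_nhds_zero_iff.1 ((leadingMinor_mul_sub_isBigO_of_isEigenpair hσ hκ h).trans_tendsto
    (by simpa using hκ.pow 2))

lemma sub_sub_div_leadingMinor_isBigO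
    (hκ : Tendsto (fun i => coupling (α i) (β i)) l (𝓝 0))
    (h : ∀ᶠ i in l, ∃ A, IsEigenpair (α i) (β i) 1 j (μ i) A)
    (h' : ∀ᶠ i in l, ∃ A, IsEigenpair (α i) (β i) (-1) j (μ' i) A) :
    (fun i => μ' i - μ i
        - (2 * β i * ∏ k ∈ Finset.range j, upper (α i) (β i) k * lower (α i) (β i) (k + 1))
          / (leadingMinor (α i) (β i) 1 (μ' i) j * leadingMinor (α i) (β i) (-1) (μ' i) j))
      =O[l] fun i => coupling (α i) (β i) ^ 2 * (μ' i - μ i) := by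
  have minor_ne := (leadingMinor_mul_tendsto (by simp) hκ h').eventually_ne
    (pow_ne_zero 2 (prod_oddSq_sub_ne_zero j))
  refine .of_bound (4 * (j + 1)) ?_
  filter_upwards [h, h', minor_ne, hκ.eventually_le_const one_half_pos]
    with i ⟨A, hA⟩ ⟨A', hA'⟩ hW hi
  rw [norm_mul, norm_pow, norm_eq_abs, norm_eq_abs, norm_eq_abs, abs_sub_comm (μ' i),
    abs_of_nonneg (coupling_nonneg (α i) (β i))]
  exact (hA.abs_sub_sub_div_leadingMinor_le hi hA' hW).trans_eq (by ring)

theorem abs_sub_sub_abs_leadingGap_isBigO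
    (hκ : Tendsto (fun i => coupling (α i) (β i)) l (𝓝 0))
    (h : ∀ᶠ i in l, ∃ A, IsEigenpair (α i) (β i) 1 j (μ i) A)
    (h' : ∀ᶠ i in l, ∃ A, IsEigenpair (α i) (β i) (-1) j (μ' i) A) :
    (fun i => |μ i - μ' i| - |leadingGap (α i) (β i) j|)
      =O[l] fun i => coupling (α i) (β i) ^ (2 * j + 3) := by
  set κ := fun i => coupling (α i) (β i)
  set W := fun i => leadingMinor (α i) (β i) 1 (μ' i) j * leadingMinor (α i) (β i) (-1) (μ' i) j
  set N := fun i => 2 * β i * ∏ k ∈ Finset.range j, upper (α i) (β i) k * lower (α i) (β i) (k + 1)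
  set P := ∏ k ∈ Finset.range j, (oddSq k - oddSq j)
  have hP : P ≠ 0 := prod_oddSq_sub_ne_zero j
  have W_sub : (fun i => W i - P ^ 2) =O[l] fun i => κ i ^ 2 :=
    leadingMinor_mul_sub_isBigO_of_isEigenpair (by simp) hκ h'
  have W_lim : Tendsto W l (𝓝 (P ^ 2)) := leadingMinor_mul_tendsto (by simp) hκ h'
  have W_ne : ∀ᶠ i in l, W i ≠ 0 := W_lim.eventually_ne (pow_ne_zero 2 hP)
  have quot_isBigO : (fun i => N i / W i) =O[l] fun i => κ i ^ (2 * j + 1) := by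
    simpa only [mul_one, div_eq_mul_inv] using
      (leadingGap_numerator_isBigO l α β j).mul ((W_lim.inv₀ (pow_ne_zero 2 hP)).isBigO_one ℝ)
  have error : (fun i => μ' i - μ i - N i / W i) =O[l] fun i => κ i ^ 2 * (μ' i - μ i) :=
    sub_sub_div_leadingMinor_isBigO hκ h h'
  have sub_isBigO : (fun i => μ' i - μ i) =O[l] fun i => κ i ^ (2 * j + 1) := by
    have hκ_sq : (fun i => κ i ^ 2) =o[l] fun _ => (1 : ℝ) :=
      (isLittleO_one_iff ℝ).2 (by simpa using hκ.pow 2)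
    have error_isLittleO : (fun i => μ' i - μ i - N i / W i) =o[l] fun i => μ' i - μ i := by
      simpa only [one_mul] using
        error.trans_isLittleO (hκ_sq.mul_isBigO (isBigO_refl (fun i => μ' i - μ i) l))
    have equiv : (fun i => N i / W i) ~[l] fun i => μ' i - μ i := error_isLittleO.symm
    exact equiv.isBigO_symm.trans quot_isBigO
  have main : (fun i => μ' i - μ i - N i / P ^ 2) =O[l] fun i => κ i ^ (2 * j + 3) := by
    have h₁ := error.trans ((isBigO_refl (fun i => κ i ^ 2) l).mul sub_isBigO)
    have h₂ := (quot_isBigO.mul W_sub).const_mul_left (P ^ 2)⁻¹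
    simp only [← pow_add] at h₁ h₂
    rw [show 2 + (2 * j + 1) = 2 * j + 3 by ring] at h₁
    refine (h₁.sub h₂).congr' ?_ .rfl
    filter_upwards [W_ne] with i hW
    field_simp
    ring
  refine .trans (.of_bound 1 (.of_forall fun i => ?_)) main
  rw [one_mul, norm_eq_abs, norm_eq_abs, abs_sub_comm (μ i)]
  exact abs_abs_sub_abs_le_abs_sub _ _

end SplittingAsymptotics

section Decay

variable {α β σ μ : ℝ}

lemma isBigO_natCast_add_one : (fun k : ℕ => (k : ℝ) + 1) =O[atTop] fun k : ℕ => (k : ℝ) :=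
  .of_bound 2 <| (eventually_ge_atTop 1).mono fun k hk => by
    have : (1 : ℝ) ≤ k := by exact_mod_cast hk
    rw [norm_of_nonneg (by positivity), norm_of_nonneg (by positivity)]
    linarith

lemma isBigO_inv_pow_comp_add_one (p : ℕ) :
    (fun k : ℕ => ((k : ℝ) ^ p)⁻¹) =O[atTop] fun k : ℕ => (((k + 1 : ℕ) : ℝ) ^ p)⁻¹ := by
  simp only [Nat.cast_add_one]
  refine (isBigO_natCast_add_one.pow p).inv_rev ((eventually_gt_atTop 0).mono fun k _ h => ?_)
  exact absurd h (by positivity)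

lemma reflectedPrev_isBigO {p : ℕ} {A : ℕ → ℝ} (hA : A =O[atTop] fun k => ((k : ℝ) ^ p)⁻¹) :
    reflectedPrev σ A =O[atTop] fun k => ((k : ℝ) ^ p)⁻¹ := by
  rw [← map_add_atTop_eq_nat 1, isBigO_map]
  exact hA.trans (isBigO_inv_pow_comp_add_one p)

lemma apply_add_one_isBigO {p : ℕ} {A : ℕ → ℝ} (hA : A =O[atTop] fun k => ((k : ℝ) ^ p)⁻¹) :
    (fun k => A (k + 1)) =O[atTop] fun k => ((k : ℝ) ^ p)⁻¹ := by
  refine (hA.comp_tendsto (tendsto_add_atTop_nat 1)).trans (.of_bound 1 ?_)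
  filter_upwards [eventually_gt_atTop 0] with k hk
  have : (0 : ℝ) < k := by exact_mod_cast hk
  rw [Function.comp_apply, one_mul, norm_of_nonneg (by positivity), norm_of_nonneg (by positivity)]
  gcongr
  linarith

lemma offDiag_isBigO {p : ℕ} {A : ℕ → ℝ} (hA : A =O[atTop] fun k => ((k : ℝ) ^ p)⁻¹) :
    offDiag α β σ A =O[atTop] fun k => (k : ℝ) * ((k : ℝ) ^ p)⁻¹ := by
  have upper_isBigO : upper α β =O[atTop] fun k : ℕ => (k : ℝ) := by
    refine (IsBigO.of_bound (coupling α β) (.of_forall fun k => ?_)).trans isBigO_natCast_add_one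
    rw [norm_eq_abs, norm_of_nonneg (by positivity : (0 : ℝ) ≤ k + 1)]
    linarith [two_mul_abs_upper_le α β k, abs_nonneg (upper α β k)]
  have lower_isBigO : lower α β =O[atTop] fun k : ℕ => (k : ℝ) := by
    refine (IsBigO.of_bound (coupling α β) (.of_forall fun k => ?_)).trans isBigO_natCast_add_one
    rw [norm_eq_abs, norm_of_nonneg (by positivity : (0 : ℝ) ≤ k + 1)]
    linarith [two_mul_abs_lower_le α β k, abs_nonneg (lower α β k)]
  exact (upper_isBigO.mul (apply_add_one_isBigO hA)).add
    (lower_isBigO.mul (reflectedPrev_isBigO hA))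

lemma eventually_sq_le_oddSq_sub (μ : ℝ) : ∀ᶠ k : ℕ in atTop, (k : ℝ) ^ 2 ≤ oddSq k - μ := by
  filter_upwards [tendsto_natCast_atTop_atTop.eventually_ge_atTop |μ|] with k hk
  have := le_abs_self μ
  unfold oddSq
  nlinarith

lemma isBigO_inv_pow_succ_of_solution {p : ℕ} {A : ℕ → ℝ}
    (hA : ∀ k, (oddSq k - μ) * A k = offDiag α β σ A k)
    (hp : A =O[atTop] fun k => ((k : ℝ) ^ p)⁻¹) :
    A =O[atTop] fun k => ((k : ℝ) ^ (p + 1))⁻¹ := by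
  have sq_mul : (fun k : ℕ => (k : ℝ) ^ 2 * A k) =O[atTop] offDiag α β σ A := by
    refine .of_bound 1 ?_
    filter_upwards [eventually_sq_le_oddSq_sub μ] with k hk
    rw [← hA k, one_mul, norm_mul, norm_mul]
    gcongr
    rw [norm_of_nonneg (by positivity)]
    exact hk.trans (le_abs_self _)
  refine ((isBigO_refl (fun k : ℕ => ((k : ℝ) ^ 2)⁻¹) atTop).mul
    (sq_mul.trans (offDiag_isBigO hp))).congr' ?_ ?_
  · filter_upwards [eventually_ne_atTop 0] with k hk
    field_simp
  · filter_upwards [eventually_ne_atTop 0] with k hk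
    field_simp
    ring

theorem superpolynomialDecay_of_solution {A : ℕ →ᵇ ℝ}
    (hA : ∀ k, (oddSq k - μ) * A k = offDiag α β σ A k) :
    SuperpolynomialDecay atTop (fun k : ℕ => (k : ℝ)) A := by
  have bound : ∀ p : ℕ, A =O[atTop] fun k : ℕ => ((k : ℝ) ^ p)⁻¹ := by
    intro p
    induction p with
    | zero =>
      exact .of_bound ‖A‖ (.of_forall fun k => by simpa using A.norm_coe_le_norm k)
    | succ p ih => exact isBigO_inv_pow_succ_of_solution hA ih
  refine (superpolynomialDecay_iff_isBigO A tendsto_natCast_atTop_atTop).2 fun z => ?_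
  refine (bound z.natAbs).trans (.of_bound 1 ?_)
  filter_upwards [eventually_ge_atTop 1] with k hk
  have hk₁ : (1 : ℝ) ≤ k := by exact_mod_cast hk
  rw [one_mul, ← zpow_natCast, ← zpow_neg, norm_zpow, norm_zpow, norm_natCast]
  exact zpow_le_zpow_right₀ hk₁ (by omega)

end Decay

section OddFourierCoefficients

/-- The trigonometric functions `cos ((2k+1)x - θ)`, which change sign under translation by `π`:
cosines for `θ = 0` and sines for `θ = π / 2`. -/
def oddCos (θ : ℝ) (k : ℕ) (x : ℝ) : ℝ := cos ((2 * k + 1) * x - θ)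

/-- The Fourier coefficients of a `π`-antiperiodic function with respect to `oddCos θ`, without
normalization: `oddCos θ k` has square integral `π / 2`. -/
def oddCoeff (θ : ℝ) (g : ℝ → ℝ) (k : ℕ) : ℝ := ∫ x in (0 : ℝ)..π, g x * oddCos θ k x

/-- The phase `θ` is one for which `oddCos θ` continues to the index `-1` as `σ * oddCos θ 0`. The
two cases are `isParity_cos` and `isParity_sin`. -/
structure IsParity (σ θ : ℝ) : Prop where
  abs_le_one : |σ| ≤ 1
  cos_add : ∀ x, cos (x + θ) = σ * cos (x - θ)

variable {σ θ : ℝ} {k : ℕ}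

lemma isParity_cos : IsParity 1 0 := ⟨by simp, fun x => by simp⟩

lemma isParity_sin : IsParity (-1) (π / 2) :=
  ⟨by simp, fun x => by rw [cos_add_pi_div_two, cos_sub_pi_div_two, neg_one_mul]⟩

@[fun_prop]
lemma contDiff_oddCos {n : WithTop ℕ∞} : ContDiff ℝ n (oddCos θ k) := by
  unfold oddCos; fun_prop

lemma abs_oddCos_le_one (θ : ℝ) (k : ℕ) (x : ℝ) : |oddCos θ k x| ≤ 1 := abs_cos_le_one _

lemma oddCos_antiperiodic (θ : ℝ) (k : ℕ) : Function.Antiperiodic (oddCos θ k) π := fun x => by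
  rw [oddCos, oddCos, ← cos_add_pi, ← cos_add_nat_mul_two_pi (_ + π) k]
  ring_nf

lemma IsParity.reflectedPrev_oddCos (h : IsParity σ θ) (x : ℝ) :
    reflectedPrev σ (fun i => oddCos θ i x) k = cos ((2 * k - 1) * x - θ) := by
  cases k with
  | zero =>
    rw [reflectedPrev_zero, oddCos, Nat.cast_zero, mul_zero, zero_add, one_mul, ← h.cos_add,
      ← cos_neg]
    ring_nf
  | succ k =>
    rw [reflectedPrev_succ, oddCos, Nat.cast_add_one]
    ring_nf

lemma abs_oddCoeff_le {g : ℝ → ℝ} (hg : Continuous g) (θ : ℝ) (k : ℕ) :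
    |oddCoeff θ g k| ≤ ∫ x in (0 : ℝ)..π, |g x| := by
  refine (intervalIntegral.abs_integral_le_integral_abs pi_nonneg).trans ?_
  refine intervalIntegral.integral_mono_on pi_nonneg
    (Continuous.intervalIntegrable (by fun_prop) _ _)
    (Continuous.intervalIntegrable (by fun_prop) _ _) fun x _ => ?_
  rw [abs_mul]
  exact mul_le_of_le_one_right (abs_nonneg _) (abs_oddCos_le_one θ k x)

lemma oddCoeff_add {g g' : ℝ → ℝ} (hg : Continuous g) (hg' : Continuous g') (θ : ℝ) :
    oddCoeff θ (g + g') = oddCoeff θ g + oddCoeff θ g' := by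
  ext k
  simp only [oddCoeff, Pi.add_apply, add_mul]
  exact intervalIntegral.integral_add (Continuous.intervalIntegrable (by fun_prop) _ _)
    (Continuous.intervalIntegrable (by fun_prop) _ _)

lemma oddCoeff_smul (c : ℝ) (g : ℝ → ℝ) (θ : ℝ) : oddCoeff θ (c • g) = c • oddCoeff θ g := by
  ext k
  simp only [oddCoeff, Pi.smul_apply, smul_eq_mul, mul_assoc, intervalIntegral.integral_const_mul]

lemma offDiag_oddCoeff {g : ℝ → ℝ} (hg : Continuous g) (α β σ : ℝ) :
    offDiag α β σ (oddCoeff θ g) k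
      = ∫ x in (0 : ℝ)..π, g x * offDiag α β σ (fun i => oddCos θ i x) k := by
  have integrable : ∀ i,
      IntervalIntegrable (fun x => g x * oddCos θ i x) MeasureTheory.volume 0 π := fun i =>
    Continuous.intervalIntegrable (by fun_prop) _ _
  have prev : ∃ r i, ∀ B : ℕ → ℝ, reflectedPrev σ B k = r * B i := by
    cases k with
    | zero => exact ⟨σ, 0, fun _ => rfl⟩
    | succ k => exact ⟨1, k, fun _ => (one_mul _).symm⟩
  obtain ⟨r, i, hr⟩ := prev
  simp only [offDiag_apply, hr, oddCoeff, ← intervalIntegral.integral_const_mul]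
  rw [← intervalIntegral.integral_add ((integrable _).const_mul _)
    (((integrable _).const_mul _).const_mul _)]
  congr 1
  ext x
  ring

lemma IsParity.integral_mul_cos_eq_zero {g : ℝ → ℝ} (h : IsParity σ θ)
    (hg : ∀ k, oddCoeff θ g k = 0) (n : ℤ) :
    ∫ x in (0 : ℝ)..π, g x * cos ((2 * n - 1) * x - θ) = 0 := by
  rcases lt_or_ge 0 n with hn | hn
  · obtain ⟨k, rfl⟩ : ∃ k : ℕ, n = k + 1 := ⟨(n - 1).toNat, by omega⟩
    refine Eq.trans ?_ (hg k)
    unfold oddCoeff oddCos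
    congr 1
    ext x
    push_cast
    ring_nf
  · obtain ⟨k, rfl⟩ : ∃ k : ℕ, n = -k := ⟨(-n).toNat, by omega⟩
    suffices ∫ x in (0 : ℝ)..π, g x * cos ((2 * ((-k : ℤ) : ℝ) - 1) * x - θ)
        = σ * oddCoeff θ g k by rw [this, hg, mul_zero]
    unfold oddCoeff oddCos
    rw [← intervalIntegral.integral_const_mul]
    congr 1
    ext x
    rw [mul_left_comm, ← h.cos_add, ← cos_neg]
    push_cast
    ring_nf

lemma eq_zero_of_fourierCoeff_eq_zero {T : ℝ} [Fact (0 < T)] {F : C(AddCircle T, ℂ)}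
    (hF : fourierCoeff F = 0) : F = 0 := by
  ext x
  have := has_pointwise_sum_fourier_series_of_summable (by rw [hF]; exact summable_zero) x
  simpa [hF] using this.unique (by simp [hF, hasSum_zero])

lemma eq_zero_of_oddCoeff_eq_zero {g : ℝ → ℝ} (hg : Continuous g)
    (hg_anti : Function.Antiperiodic g π) (hcos : ∀ k, oddCoeff 0 g k = 0)
    (hsin : ∀ k, oddCoeff (π / 2) g k = 0) : g = 0 := by
  have : Fact (0 < π) := ⟨pi_pos⟩
  have hG : Function.Periodic (fun x : ℝ => Complex.exp (x * Complex.I) * g x) π := fun x => by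
    push_cast
    rw [hg_anti, Complex.ofReal_neg, add_mul, Complex.exp_add, Complex.exp_pi_mul_I]
    ring
  have hG_cont : Continuous fun x : ℝ => Complex.exp (x * Complex.I) * g x := by fun_prop
  let F : C(AddCircle π, ℂ) := ⟨hG.lift, continuous_coinduced_dom.mpr hG_cont⟩
  have hF_apply : ∀ x : ℝ, F x = Complex.exp (x * Complex.I) * g x := fun _ => rfl
  have integrand : ∀ (n : ℤ) (x : ℝ), fourier (-n) (x : AddCircle π) • F x
      = ((g x * cos ((2 * n - 1) * x - 0) : ℝ) : ℂ)
        - Complex.I * ((g x * cos ((2 * n - 1) * x - π / 2) : ℝ) : ℂ) := fun n x => by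
    have hπ : (π : ℂ) ≠ 0 := by exact_mod_cast pi_ne_zero
    have phase : 2 * π * Complex.I * ((-n : ℤ) : ℂ) * x / π + x * Complex.I
        = ((-((2 * n - 1) * x) : ℝ) : ℂ) * Complex.I := by
      push_cast; field_simp; ring
    rw [hF_apply, fourier_coe_apply, smul_eq_mul, ← mul_assoc, ← Complex.exp_add, phase,
      Complex.exp_mul_I, ← Complex.ofReal_cos, ← Complex.ofReal_sin, cos_neg, sin_neg, sub_zero,
      cos_sub_pi_div_two]
    push_cast
    ring
  have hF : fourierCoeff F = 0 := by
    ext n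
    rw [fourierCoeff_eq_intervalIntegral _ n 0, zero_add]
    simp_rw [integrand]
    rw [intervalIntegral.integral_sub (Continuous.intervalIntegrable (by fun_prop) _ _)
        (Continuous.intervalIntegrable (by fun_prop) _ _),
      intervalIntegral.integral_const_mul, intervalIntegral.integral_ofReal,
      intervalIntegral.integral_ofReal, isParity_cos.integral_mul_cos_eq_zero hcos,
      isParity_sin.integral_mul_cos_eq_zero hsin]
    simp
  ext x
  have hx := hF_apply x
  rw [eq_zero_of_fourierCoeff_eq_zero hF] at hx
  simpa [Complex.exp_ne_zero] using hx.symm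

end OddFourierCoefficients

section GaugedOperator

/-- The Whittaker–Hill potential. The parametrization by `α` and `β` is the one for which
conjugation by `gauge α` turns the equation into one with a three-term recursion. -/
def whittakerHill (α β x : ℝ) : ℝ := -(2 * β) * cos (2 * x) - 2 * α ^ 2 * cos (4 * x)

/-- The positive factor `e^{-α cos 2x}` that reduces the Whittaker–Hill equation to Ince's
equation. -/
def gauge (α x : ℝ) : ℝ := exp (-(α * cos (2 * x)))

/-- The residual `f'' + (λ - v) f` of the eigenvalue equation `-f'' + v f = λ f`. -/
def hillResidual (v : ℝ → ℝ) (lam : ℝ) (f : ℝ → ℝ) (x : ℝ) : ℝ :=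
  deriv (deriv f) x + (lam - v x) * f x

variable {α β σ θ μ lam : ℝ} {v f u φ ψ : ℝ → ℝ} {k : ℕ}

@[fun_prop]
lemma continuous_whittakerHill (α β : ℝ) : Continuous (whittakerHill α β) := by
  unfold whittakerHill; fun_prop

lemma whittakerHill_periodic (α β : ℝ) : Function.Periodic (whittakerHill α β) π := fun x => by
  rw [whittakerHill, whittakerHill, mul_add, cos_add_two_pi,
    show 4 * (x + π) = 4 * x + 2 * π + 2 * π by ring, cos_add_two_pi, cos_add_two_pi]

lemma gauge_periodic (α : ℝ) : Function.Periodic (gauge α) π := fun x => by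
  rw [gauge, gauge, mul_add, cos_add_two_pi]

@[fun_prop]
lemma contDiff_gauge (α : ℝ) {n : WithTop ℕ∞} : ContDiff ℝ n (gauge α) := by
  unfold gauge; fun_prop

@[fun_prop]
lemma continuous_gauge (α : ℝ) : Continuous (gauge α) := (contDiff_gauge α (n := 0)).continuous

lemma gauge_mul_gauge_neg_mul (α : ℝ) (f : ℝ → ℝ) : gauge α * (gauge (-α) * f) = f := by
  ext x
  rw [Pi.mul_apply, Pi.mul_apply, ← mul_assoc, gauge, gauge, ← exp_add]
  simp

lemma gauge_mul_eq_zero_iff : gauge α * f = 0 ↔ f = 0 := by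
  simp only [funext_iff, Pi.mul_apply, Pi.zero_apply, mul_eq_zero, gauge, (exp_pos _).ne',
    false_or]

lemma hasDerivAt_gauge (α x : ℝ) :
    HasDerivAt (gauge α) (gauge α x * (2 * α * sin (2 * x))) x := by
  have := ((((hasDerivAt_id' x).const_mul 2).cos).const_mul α).neg.exp
  exact this.congr_deriv (by simp only [gauge, Pi.neg_apply]; ring)

lemma deriv_deriv_gauge_mul (hu : ContDiff ℝ 2 u) (x : ℝ) :
    deriv (deriv (gauge α * u)) x = gauge α x * (deriv (deriv u) x
      + 4 * α * sin (2 * x) * deriv u x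
      + (4 * α ^ 2 * sin (2 * x) ^ 2 + 4 * α * cos (2 * x)) * u x) := by
  have hu₁ (y : ℝ) : HasDerivAt u (deriv u y) y :=
    (hu.differentiable two_ne_zero y).hasDerivAt
  have hu₂ (y : ℝ) : HasDerivAt (deriv u) (deriv (deriv u) y) y :=
    ((hu.deriv' (n := 1)).differentiable one_ne_zero y).hasDerivAt
  have hsin (y : ℝ) : HasDerivAt (fun z => sin (2 * z)) (cos (2 * y) * 2) y := by
    simpa using ((hasDerivAt_id' y).const_mul 2).sin
  have first : deriv (gauge α * u)
      = fun y => gauge α y * (2 * α * sin (2 * y) * u y + deriv u y) :=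
    funext fun y => (((hasDerivAt_gauge α y).mul (hu₁ y)).congr_deriv (by ring)).deriv
  have second := (hasDerivAt_gauge α x).fun_mul
    ((((hsin x).const_mul (2 * α)).fun_mul (hu₁ x)).fun_add (hu₂ x))
  rw [first, second.deriv]
  ring

lemma hillResidual_gauge_mul (hu : ContDiff ℝ 2 u) (x : ℝ) :
    hillResidual (whittakerHill α β) (μ - 2 * α ^ 2) (gauge α * u) x
      = gauge α x * (deriv (deriv u) x + 4 * α * sin (2 * x) * deriv u x
        + (μ + 2 * (β + 2 * α) * cos (2 * x)) * u x) := by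
  have cos_four : cos (4 * x) = 1 - 2 * sin (2 * x) ^ 2 := by
    rw [show 4 * x = 2 * (2 * x) by ring, cos_two_mul, cos_sq']
    ring
  rw [hillResidual, deriv_deriv_gauge_mul hu, whittakerHill, cos_four, Pi.mul_apply]
  ring

lemma hillResidual_gauge_mul_oddCos (h : IsParity σ θ) (k : ℕ) (x : ℝ) :
    hillResidual (whittakerHill α β) (μ - 2 * α ^ 2) (gauge α * oddCos θ k) x
      = gauge α x * ((μ - oddSq k) * oddCos θ k x + offDiag α β σ (fun i => oddCos θ i x) k) := by
  have phase (y : ℝ) : HasDerivAt (fun z : ℝ => (2 * k + 1) * z - θ) (2 * k + 1) y := by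
    simpa using ((hasDerivAt_id' y).const_mul (2 * (k : ℝ) + 1)).sub_const θ
  have first : deriv (oddCos θ k) = fun y => -sin ((2 * k + 1) * y - θ) * (2 * k + 1) :=
    funext fun y => (phase y).cos.deriv
  have second : deriv (deriv (oddCos θ k)) x = -(oddSq k * oddCos θ k x) := by
    rw [first, ((phase x).sin.fun_neg.mul_const _).deriv, oddSq, oddCos]
    ring
  have next : oddCos θ (k + 1) x = cos ((2 * k + 1) * x - θ + 2 * x) := by
    rw [oddCos, Nat.cast_add_one]; ring_nf
  have prev : reflectedPrev σ (fun i => oddCos θ i x) k = cos ((2 * k + 1) * x - θ - 2 * x) := by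
    rw [h.reflectedPrev_oddCos]; ring_nf
  rw [hillResidual_gauge_mul contDiff_oddCos, second, first, offDiag_apply, next, prev,
    cos_add _ (2 * x), cos_sub _ (2 * x), upper, lower, oddCos]
  ring

lemma gauge_mul_antiperiodic (α : ℝ) (hf : Function.Antiperiodic f π) :
    Function.Antiperiodic (gauge α * f) π := fun x => by
  rw [Pi.mul_apply, Pi.mul_apply, gauge_periodic, hf, mul_neg]

lemma deriv_antiperiodic {c : ℝ} (hf : Function.Antiperiodic f c) :
    Function.Antiperiodic (deriv f) c := fun x => by
  rw [← deriv_comp_add_const, funext hf, deriv.fun_neg]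

lemma integral_mul_hillResidual_comm {c : ℝ} (hv : Continuous v) (hφ : ContDiff ℝ 2 φ)
    (hψ : ContDiff ℝ 2 ψ) (hφ_anti : Function.Antiperiodic φ c)
    (hψ_anti : Function.Antiperiodic ψ c) :
    ∫ x in (0 : ℝ)..c, φ x * hillResidual v lam ψ x
      = ∫ x in (0 : ℝ)..c, hillResidual v lam φ x * ψ x := by
  have hφ' : ContDiff ℝ 1 (deriv φ) := hφ.deriv'
  have hψ' : ContDiff ℝ 1 (deriv ψ) := hψ.deriv'
  have : Continuous (deriv (deriv φ)) := hφ'.continuous_deriv le_rfl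
  have : Continuous (deriv (deriv ψ)) := hψ'.continuous_deriv le_rfl
  have wronskian (x : ℝ) : HasDerivAt (φ * deriv ψ - deriv φ * ψ)
      (φ x * hillResidual v lam ψ x - hillResidual v lam φ x * ψ x) x := by
    have h := (((hφ.differentiable two_ne_zero x).hasDerivAt).mul
      (hψ'.differentiable one_ne_zero x).hasDerivAt).sub
      ((hφ'.differentiable one_ne_zero x).hasDerivAt.mul
      (hψ.differentiable two_ne_zero x).hasDerivAt)
    exact h.congr_deriv (by unfold hillResidual; ring)
  have hφ_cont := hφ.continuous
  have hψ_cont := hψ.continuous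
  have left : Continuous fun x => φ x * hillResidual v lam ψ x := by
    unfold hillResidual; fun_prop
  have right : Continuous fun x => hillResidual v lam φ x * ψ x := by
    unfold hillResidual; fun_prop
  rw [← sub_eq_zero, ← intervalIntegral.integral_sub (left.intervalIntegrable _ _)
    (right.intervalIntegrable _ _), intervalIntegral.integral_eq_sub_of_hasDerivAt
    (fun x _ => wronskian x) ((left.sub right).intervalIntegrable _ _)]
  simp only [Pi.sub_apply, Pi.mul_apply, hφ_anti.eq, hψ_anti.eq,
    (deriv_antiperiodic hφ_anti).eq, (deriv_antiperiodic hψ_anti).eq]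
  ring

lemma oddCoeff_gauge_mul_hillResidual (h : IsParity σ θ) (hf : ContDiff ℝ 2 f)
    (hf_anti : Function.Antiperiodic f π) (k : ℕ) :
    oddCoeff θ (gauge α * hillResidual (whittakerHill α β) (μ - 2 * α ^ 2) f) k
      = (μ - oddSq k) * oddCoeff θ (gauge α * f) k
        + offDiag α β σ (oddCoeff θ (gauge α * f)) k := by
  have hf_cont := hf.continuous
  have hg : Continuous (gauge α * f) := by fun_prop
  have test_diff : ContDiff ℝ 2 (gauge α * oddCos θ k) := (contDiff_gauge α).mul contDiff_oddCos
  have symm := integral_mul_hillResidual_comm (lam := μ - 2 * α ^ 2)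
    (continuous_whittakerHill α β) hf test_diff hf_anti
    (gauge_mul_antiperiodic α (oddCos_antiperiodic θ k))
  have test_continuous : Continuous fun x => offDiag α β σ (fun i => oddCos θ i x) k := by
    simp only [offDiag_apply, h.reflectedPrev_oddCos]; fun_prop
  calc oddCoeff θ (gauge α * hillResidual (whittakerHill α β) (μ - 2 * α ^ 2) f) k
      = ∫ x in (0 : ℝ)..π, hillResidual (whittakerHill α β) (μ - 2 * α ^ 2) f x
          * (gauge α * oddCos θ k) x := by
        unfold oddCoeff; congr 1; ext x; simp only [Pi.mul_apply]; ring
    _ = ∫ x in (0 : ℝ)..π, ((μ - oddSq k) * ((gauge α * f) x * oddCos θ k x)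
          + (gauge α * f) x * offDiag α β σ (fun i => oddCos θ i x) k) := by
        rw [← symm]
        simp only [hillResidual_gauge_mul_oddCos h, Pi.mul_apply]
        congr 1; ext x; ring
    _ = _ := by
        rw [offDiag_oddCoeff hg, oddCoeff, ← intervalIntegral.integral_const_mul]
        exact intervalIntegral.integral_add (Continuous.intervalIntegrable (by fun_prop) _ _)
          (Continuous.intervalIntegrable (by fun_prop) _ _)

lemma isSemiEF_iff : IsSemiEF v lam f
    ↔ ContDiff ℝ 2 f ∧ hillResidual v lam f = 0 ∧ Function.Antiperiodic f π := by
  refine and_congr_right fun _ => and_congr_left fun _ => ?_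
  simp only [funext_iff, hillResidual, Pi.zero_apply]
  exact forall_congr' fun x => ⟨fun h => by linarith, fun h => by linarith⟩

lemma oddSq_sub_mul_oddCoeff_of_isSemiEF (h : IsParity σ θ)
    (hf : IsSemiEF (whittakerHill α β) (μ - 2 * α ^ 2) f) (k : ℕ) :
    (oddSq k - μ) * oddCoeff θ (gauge α * f) k = offDiag α β σ (oddCoeff θ (gauge α * f)) k := by
  obtain ⟨hf_diff, hf_eqn, hf_anti⟩ := isSemiEF_iff.mp hf
  have := oddCoeff_gauge_mul_hillResidual (α := α) (β := β) (μ := μ) h hf_diff hf_anti k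
  rw [hf_eqn, mul_zero, oddCoeff] at this
  simp only [Pi.zero_apply, zero_mul, intervalIntegral.integral_zero] at this
  linarith

lemma isSemiEF_of_oddCoeff_eqn (hf : ContDiff ℝ 2 f) (hf_anti : Function.Antiperiodic f π)
    (hcos : ∀ k, (oddSq k - μ) * oddCoeff 0 (gauge α * f) k
      = offDiag α β 1 (oddCoeff 0 (gauge α * f)) k)
    (hsin : ∀ k, (oddSq k - μ) * oddCoeff (π / 2) (gauge α * f) k
      = offDiag α β (-1) (oddCoeff (π / 2) (gauge α * f)) k) :
    IsSemiEF (whittakerHill α β) (μ - 2 * α ^ 2) f := by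
  set r := hillResidual (whittakerHill α β) (μ - 2 * α ^ 2) f with hr
  have hr_cont : Continuous r := by
    have hf_cont := hf.continuous
    have : Continuous (deriv (deriv f)) := (hf.deriv' (n := 1)).continuous_deriv le_rfl
    unfold r hillResidual; fun_prop
  have hr_anti : Function.Antiperiodic r π := fun x => by
    rw [hr, hillResidual, hillResidual, deriv_antiperiodic (deriv_antiperiodic hf_anti),
      hf_anti, whittakerHill_periodic]
    ring
  have coeff_eq_zero {σ θ : ℝ} (h : IsParity σ θ) (heqn : ∀ k,
      (oddSq k - μ) * oddCoeff θ (gauge α * f) k = offDiag α β σ (oddCoeff θ (gauge α * f)) k)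
      (k : ℕ) : oddCoeff θ (gauge α * r) k = 0 := by
    rw [hr, oddCoeff_gauge_mul_hillResidual h hf hf_anti, ← heqn]
    ring
  refine isSemiEF_iff.mpr ⟨hf, gauge_mul_eq_zero_iff (α := α).mp ?_, hf_anti⟩
  exact eq_zero_of_oddCoeff_eq_zero ((continuous_gauge α).mul hr_cont)
    (gauge_mul_antiperiodic α hr_anti) (coeff_eq_zero isParity_cos hcos)
    (coeff_eq_zero isParity_sin hsin)

end GaugedOperator

section CosineSeries

/-- The trigonometric series with coefficients `A` in the functions `oddCos θ`. -/
def cosSeries (A : ℕ → ℝ) (θ x : ℝ) : ℝ := ∑' k, A k * oddCos θ k x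

variable {A : ℕ → ℝ} {θ : ℝ}

lemma summable_abs_mul_pow_of_superpolynomialDecay
    (hA : SuperpolynomialDecay atTop (fun k : ℕ => (k : ℝ)) A) (p : ℕ) :
    Summable fun k : ℕ => |A k| * (2 * k + 1) ^ p := by
  have odd_isBigO : (fun k : ℕ => (2 * k + 1 : ℝ)) =O[atTop] fun k : ℕ => (k : ℝ) := by
    refine IsBigO.of_bound 3 ((eventually_ge_atTop 1).mono fun k hk => ?_)
    have : (1 : ℝ) ≤ k := by exact_mod_cast hk
    rw [norm_of_nonneg (by positivity), norm_of_nonneg (by positivity)]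
    linarith
  have decay : (fun k : ℕ => |A k| * (k : ℝ) ^ p) =O[atTop] fun k : ℕ => ((k : ℝ) ^ 2)⁻¹ := by
    refine IsBigO.of_bound 1 ?_
    have h := (hA (p + 2)).abs.eventually_le_const (by norm_num : |(0 : ℝ)| < 1)
    filter_upwards [h, eventually_gt_atTop 0] with k hk hk_pos
    have : (0 : ℝ) < k := by exact_mod_cast hk_pos
    rw [norm_of_nonneg (by positivity), norm_of_nonneg (by positivity), one_mul,
      ← one_div, le_div_iff₀ (by positivity)]
    calc |A k| * (k : ℝ) ^ p * (k : ℝ) ^ 2 = |(k : ℝ) ^ (p + 2) * A k| := by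
          rw [abs_mul, abs_of_pos (by positivity : (0 : ℝ) < (k : ℝ) ^ (p + 2))]; ring
      _ ≤ 1 := hk
  exact summable_of_isBigO_nat (Real.summable_nat_pow_inv.mpr one_lt_two)
    (((isBigO_refl (fun k => |A k|) atTop).mul (odd_isBigO.pow p)).trans decay)

lemma norm_iteratedFDeriv_oddCos_le (p : ℕ) (θ : ℝ) (k : ℕ) (x : ℝ) :
    ‖iteratedFDeriv ℝ p (oddCos θ k) x‖ ≤ (2 * k + 1) ^ p := by
  have scaled : iteratedDeriv p (oddCos θ k)
      = fun y => (2 * k + 1) ^ p * iteratedDeriv p (fun z => cos (z - θ)) ((2 * k + 1) * y) :=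
    iteratedDeriv_comp_const_mul (f := fun z => cos (z - θ)) (by fun_prop) _
  rw [norm_iteratedFDeriv_eq_norm_iteratedDeriv, scaled, iteratedDeriv_comp_sub_const, norm_mul,
    norm_pow, norm_of_nonneg (by positivity)]
  exact mul_le_of_le_one_right (by positivity) (abs_iteratedDeriv_cos_le_one _ _)

lemma contDiff_cosSeries (hA : SuperpolynomialDecay atTop (fun k : ℕ => (k : ℝ)) A) (θ : ℝ)
    (n : ℕ∞) : ContDiff ℝ n (cosSeries A θ) := by
  refine contDiff_tsum (fun k => contDiff_const.mul contDiff_oddCos)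
    (fun p _ => summable_abs_mul_pow_of_superpolynomialDecay hA p) fun p k x _ => ?_
  change ‖iteratedFDeriv ℝ p (A k • oddCos θ k) x‖ ≤ _
  rw [iteratedFDeriv_const_smul_apply contDiff_oddCos.contDiffAt, norm_smul, norm_eq_abs]
  exact mul_le_mul_of_nonneg_left (norm_iteratedFDeriv_oddCos_le p θ k x) (abs_nonneg _)

lemma cosSeries_antiperiodic (A : ℕ → ℝ) (θ : ℝ) :
    Function.Antiperiodic (cosSeries A θ) π := fun x => by
  simp only [cosSeries, oddCos_antiperiodic θ _ x, mul_neg, tsum_neg]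

lemma integral_cos_two_mul_sub (n : ℤ) (θ : ℝ) :
    ∫ x in (0 : ℝ)..π, cos (2 * n * x - θ) = if n = 0 then π * cos θ else 0 := by
  split_ifs with hn
  · simp [hn]
  have hn' : (2 * n : ℝ) ≠ 0 := mul_ne_zero two_ne_zero (by exact_mod_cast hn)
  rw [intervalIntegral.integral_comp_mul_sub (f := cos) hn', integral_cos,
    show 2 * n * π - θ = (2 * n * 0 - θ) + n * (2 * π) by ring, sin_add_int_mul_two_pi, sub_self,
    smul_zero]

lemma integral_oddCos_mul_oddCos (θ θ' : ℝ) (k j : ℕ) :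
    ∫ x in (0 : ℝ)..π, oddCos θ k x * oddCos θ' j x
      = if k = j then π / 2 * cos (θ - θ') else 0 := by
  have product (x : ℝ) : oddCos θ k x * oddCos θ' j x
      = 1 / 2 * (cos (2 * ((k + j + 1 : ℤ) : ℝ) * x - (θ + θ'))
        + cos (2 * ((k - j : ℤ) : ℝ) * x - (θ - θ'))) := by
    have sum : 2 * ((k + j + 1 : ℤ) : ℝ) * x - (θ + θ')
        = ((2 * k + 1) * x - θ) + ((2 * j + 1) * x - θ') := by push_cast; ring
    have diff : 2 * ((k - j : ℤ) : ℝ) * x - (θ - θ')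
        = ((2 * k + 1) * x - θ) - ((2 * j + 1) * x - θ') := by push_cast; ring
    rw [sum, diff, cos_add, cos_sub ((2 * k + 1) * x - θ), oddCos, oddCos]
    ring
  simp_rw [product]
  rw [intervalIntegral.integral_const_mul, intervalIntegral.integral_add
    (Continuous.intervalIntegrable (by fun_prop) _ _)
    (Continuous.intervalIntegrable (by fun_prop) _ _), integral_cos_two_mul_sub,
    integral_cos_two_mul_sub, if_neg (by omega), zero_add]
  simp only [sub_eq_zero, Nat.cast_inj, mul_ite, mul_zero]
  split_ifs <;> ring

lemma oddCoeff_cosSeries (hA : SuperpolynomialDecay atTop (fun k : ℕ => (k : ℝ)) A) (θ θ' : ℝ)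
    (j : ℕ) : oddCoeff θ' (cosSeries A θ) j = A j * (π / 2 * cos (θ - θ')) := by
  have abs_summable : Summable fun k => |A k| := by
    simpa using summable_abs_mul_pow_of_superpolynomialDecay hA 0
  have bound (k : ℕ) (x : ℝ) : ‖A k * oddCos θ k x‖ ≤ |A k| := by
    rw [norm_mul]
    exact mul_le_of_le_one_right (norm_nonneg _) (abs_oddCos_le_one θ k x)
  have termwise : HasSum (fun k => ∫ x in (0 : ℝ)..π, A k * oddCos θ k x * oddCos θ' j x)
      (oddCoeff θ' (cosSeries A θ) j) := by
    refine intervalIntegral.hasSum_integral_of_dominated_convergence (fun k _ => |A k|)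
      (fun k => Continuous.aestronglyMeasurable (by fun_prop))
      (fun k => .of_forall fun x _ => ?_) (.of_forall fun x _ => abs_summable)
      intervalIntegrable_const (.of_forall fun x _ => ?_)
    · rw [norm_mul]
      exact (mul_le_of_le_one_right (norm_nonneg _) (abs_oddCos_le_one θ' j x)).trans (bound k x)
    · exact (Summable.of_norm_bounded abs_summable fun k => bound k x).hasSum.mul_right _
  simp only [mul_assoc, intervalIntegral.integral_const_mul, integral_oddCos_mul_oddCos,
    mul_ite, mul_zero] at termwise
  rw [← tsum_ite_eq j fun k => A k * (π / 2 * cos (θ - θ')), ← termwise.tsum_eq]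

end CosineSeries

section Multiplicity

/-- The space of all semi-periodic solutions of `-f'' + v f = λ f`; its dimension is
`semiMult v λ`. -/
def semiSpace (v : ℝ → ℝ) (lam : ℝ) : Submodule ℝ (ℝ → ℝ) where
  carrier := {f | IsSemiEF v lam f}
  zero_mem' := isSemiEF_iff.mpr ⟨contDiff_const, by ext; simp [hillResidual], fun x => by simp⟩
  add_mem' := by
    rintro f g ⟨hf, hf_eqn, hf_anti⟩ ⟨hg, hg_eqn, hg_anti⟩
    have first : deriv (f + g) = deriv f + deriv g := funext fun x =>
      deriv_add (hf.differentiable two_ne_zero x) (hg.differentiable two_ne_zero x)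
    refine ⟨hf.add hg, fun x => ?_, fun x => ?_⟩
    · rw [first, deriv_add ((hf.deriv' (n := 1)).differentiable one_ne_zero x)
        ((hg.deriv' (n := 1)).differentiable one_ne_zero x), Pi.add_apply]
      linarith [hf_eqn x, hg_eqn x]
    · rw [Pi.add_apply, Pi.add_apply, hf_anti, hg_anti, neg_add]
  smul_mem' := by
    rintro c f ⟨hf, hf_eqn, hf_anti⟩
    have first : deriv (c • f) = c • deriv f := funext fun x => deriv_const_smul_field c f
    refine ⟨hf.const_smul c, fun x => ?_, fun x => ?_⟩
    · rw [first, deriv_const_smul_field, Pi.smul_apply, smul_eq_mul, smul_eq_mul]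
      linear_combination c * hf_eqn x
    · rw [Pi.smul_apply, Pi.smul_apply, hf_anti, smul_neg]

/-- The space of bounded solutions of the recursion for the Fourier coefficients. -/
def solutionSpace (α β σ μ : ℝ) : Submodule ℝ (ℕ →ᵇ ℝ) where
  carrier := {A | ∀ k, (oddSq k - μ) * A k = offDiag α β σ A k}
  zero_mem' k := by
    have : offDiag α β σ ⇑(0 : ℕ →ᵇ ℝ) = 0 := map_zero _
    rw [this, Pi.zero_apply, BoundedContinuousFunction.coe_zero, Pi.zero_apply, mul_zero]
  add_mem' hA hA' k := by
    simp only [BoundedContinuousFunction.coe_add, map_add, Pi.add_apply, mul_add, hA k, hA' k]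
  smul_mem' c A hA k := by
    rw [offDiag_smul, Pi.smul_apply, BoundedContinuousFunction.smul_apply, smul_eq_mul, smul_eq_mul,
      ← hA k, mul_left_comm]

variable {α β σ θ μ μ' x : ℝ} {j k m : ℕ} {A A' : ℕ →ᵇ ℝ} {f : ℝ → ℝ}

lemma semiMult_eq_finrank (v : ℝ → ℝ) (lam : ℝ) :
    semiMult v lam = Module.finrank ℝ (semiSpace v lam) := by
  change Module.finrank ℝ (Submodule.span ℝ (semiSpace v lam : Set (ℝ → ℝ))) = _
  rw [Submodule.span_eq]

lemma continuous_gauge_mul_of_isSemiEF {v : ℝ → ℝ} {lam : ℝ} (hf : IsSemiEF v lam f) (α : ℝ) :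
    Continuous (gauge α * f) := (continuous_gauge α).mul hf.1.continuous

/-- The Fourier coefficients of `e^{-α cos 2x} f`, for a semi-periodic solution `f`, as a linear
map into the bounded solutions of the recursion. -/
def oddCoeffMap (α β μ : ℝ) (h : IsParity σ θ) :
    semiSpace (whittakerHill α β) (μ - 2 * α ^ 2) →ₗ[ℝ] solutionSpace α β σ μ where
  toFun f := ⟨.ofNormedAddCommGroupDiscrete (oddCoeff θ (gauge α * f)) _
    (abs_oddCoeff_le (continuous_gauge_mul_of_isSemiEF f.2 α) θ),
    oddSq_sub_mul_oddCoeff_of_isSemiEF h f.2⟩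
  map_add' f g := by
    ext k
    have := oddCoeff_add (continuous_gauge_mul_of_isSemiEF f.2 α)
      (continuous_gauge_mul_of_isSemiEF g.2 α) θ
    rw [← mul_add] at this
    exact congrFun this k
  map_smul' c f := by
    ext k
    have := oddCoeff_smul c (gauge α * f) θ
    rw [← mul_smul_comm] at this
    exact congrFun this k

lemma exists_isSemiEF_of_mem_solutionSpace (hA : A ∈ solutionSpace α β 1 μ)
    (hA' : A' ∈ solutionSpace α β (-1) μ) :
    ∃ f, IsSemiEF (whittakerHill α β) (μ - 2 * α ^ 2) f ∧
      oddCoeff 0 (gauge α * f) = A ∧ oddCoeff (π / 2) (gauge α * f) = A' := by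
  have decay := superpolynomialDecay_of_solution hA
  have decay' := superpolynomialDecay_of_solution hA'
  have smooth (n : ℕ∞) := contDiff_cosSeries decay 0 n
  have smooth' (n : ℕ∞) := contDiff_cosSeries decay' (π / 2) n
  have coeff (θ : ℝ) (k : ℕ) :
      oddCoeff θ ((2 / π) • (cosSeries A 0 + cosSeries A' (π / 2))) k
        = A k * cos (0 - θ) + A' k * cos (π / 2 - θ) := by
    rw [oddCoeff_smul, oddCoeff_add (smooth 0).continuous (smooth' 0).continuous, Pi.smul_apply,
      Pi.add_apply, oddCoeff_cosSeries decay, oddCoeff_cosSeries decay', smul_eq_mul]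
    field_simp
  have hcos : oddCoeff 0 ((2 / π) • (cosSeries A 0 + cosSeries A' (π / 2))) = A :=
    funext fun k => by rw [coeff]; simp
  have hsin : oddCoeff (π / 2) ((2 / π) • (cosSeries A 0 + cosSeries A' (π / 2))) = A' :=
    funext fun k => by rw [coeff]; simp
  refine ⟨gauge (-α) * (2 / π) • (cosSeries A 0 + cosSeries A' (π / 2)),
    isSemiEF_of_oddCoeff_eqn
      ((contDiff_gauge _).mul (((smooth 2).add (smooth' 2)).const_smul (2 / π)))
      (gauge_mul_antiperiodic _ fun x => ?_) ?_ ?_, ?_, ?_⟩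
  · simp only [Pi.smul_apply, Pi.add_apply, cosSeries_antiperiodic A 0 x,
      cosSeries_antiperiodic A' (π / 2) x, ← neg_add, smul_neg]
  all_goals rw [gauge_mul_gauge_neg_mul]
  · rwa [hcos]
  · rwa [hsin]
  · exact hcos
  · exact hsin

/-- Semi-periodic solutions correspond to pairs of bounded solutions of the recursion: the cosine
and the sine coefficients. -/
def semiSpaceEquiv (α β μ : ℝ) : semiSpace (whittakerHill α β) (μ - 2 * α ^ 2)
    ≃ₗ[ℝ] solutionSpace α β 1 μ × solutionSpace α β (-1) μ :=
  .ofBijective ((oddCoeffMap α β μ isParity_cos).prod (oddCoeffMap α β μ isParity_sin)) <| by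
    refine ⟨(injective_iff_map_eq_zero _).2 fun f hf => ?_, fun ⟨⟨A, hA⟩, ⟨A', hA'⟩⟩ => ?_⟩
    · obtain ⟨hcos, hsin⟩ := Prod.mk.inj hf
      refine Subtype.ext (gauge_mul_eq_zero_iff (α := α).mp (eq_zero_of_oddCoeff_eq_zero
        (continuous_gauge_mul_of_isSemiEF f.2 α) (gauge_mul_antiperiodic α f.2.2.2)
        (fun k => ?_) fun k => ?_))
      · exact DFunLike.congr_fun (congrArg Subtype.val hcos) k
      · exact DFunLike.congr_fun (congrArg Subtype.val hsin) k
    · obtain ⟨f, hf, hcos, hsin⟩ := exists_isSemiEF_of_mem_solutionSpace hA hA'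
      exact ⟨⟨f, hf⟩, Prod.ext (Subtype.ext (DFunLike.coe_injective hcos))
        (Subtype.ext (DFunLike.coe_injective hsin))⟩

lemma eq_zero_of_solutionSpace_eq_bot (hcos : solutionSpace α β 1 μ = ⊥)
    (hsin : solutionSpace α β (-1) μ = ⊥)
    (hf : IsSemiEF (whittakerHill α β) (μ - 2 * α ^ 2) f) : f = 0 := by
  have := Submodule.subsingleton_iff_eq_bot.mpr hcos
  have := Submodule.subsingleton_iff_eq_bot.mpr hsin
  have h : (⟨f, hf⟩ : semiSpace (whittakerHill α β) (μ - 2 * α ^ 2)) = 0 :=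
    (semiSpaceEquiv α β μ).injective (Subsingleton.elim _ _)
  exact congrArg Subtype.val h

lemma solutionSpace_eq_bot_of_ne (hσ : |σ| ≤ 1) (hsmall : 8 * coupling α β * (j + 1) ≤ 1)
    (hA : IsEigenpair α β σ j μ A) (hx : |x - oddSq j| ≤ 1) (hne : x ≠ μ) :
    solutionSpace α β σ x = ⊥ :=
  (Submodule.eq_bot_iff _).mpr fun _ hA' => eq_zero_of_solution_near hσ
    ((coupling_le_of_small hsmall).trans (by norm_num)) hx
    (hA.apply_eq_zero_of_ne hσ hsmall hx hA' hne) hA'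

lemma finrank_solutionSpace_eq_one (hσ : |σ| ≤ 1) (hκ : coupling α β ≤ 1 / 2)
    (hA : IsEigenpair α β σ j μ A) : Module.finrank ℝ (solutionSpace α β σ μ) = 1 := by
  let E : solutionSpace α β σ μ := ⟨A, hA.eqn_all⟩
  refine finrank_eq_one E (fun h => ?_) fun B => ⟨(B : ℕ →ᵇ ℝ) j, ?_⟩
  · have := DFunLike.congr_fun (congrArg Subtype.val h) j
    exact one_ne_zero (hA.apply_self.symm.trans this)
  · refine (sub_eq_zero.mp (Subtype.ext (eq_zero_of_solution_near hσ hκ hA.near ?_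
      (B - (B : ℕ →ᵇ ℝ) j • E).2))).symm
    change (B : ℕ →ᵇ ℝ) j - (B : ℕ →ᵇ ℝ) j * A j = 0
    rw [hA.apply_self, mul_one, sub_self]

lemma finrank_solutionSpace (hσ : |σ| ≤ 1) (hsmall : 8 * coupling α β * (j + 1) ≤ 1)
    (hA : IsEigenpair α β σ j μ A) (hx : |x - oddSq j| ≤ 1) :
    Module.finrank ℝ (solutionSpace α β σ x) = if x = μ then 1 else 0 := by
  split_ifs with h
  · exact h ▸ finrank_solutionSpace_eq_one hσ
      ((coupling_le_of_small hsmall).trans (by norm_num)) hA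
  · rw [solutionSpace_eq_bot_of_ne hσ hsmall hA hx h, finrank_bot]

lemma finite_solutionSpace (hσ : |σ| ≤ 1) (hκ : coupling α β ≤ 1 / 2) (hx : |x - oddSq j| ≤ 1) :
    Module.Finite ℝ (solutionSpace α β σ x) := by
  let eval : solutionSpace α β σ x →ₗ[ℝ] ℝ :=
    { toFun := fun A => (A : ℕ →ᵇ ℝ) j
      map_add' := fun _ _ => rfl
      map_smul' := fun _ _ => rfl }
  exact .of_injective eval ((injective_iff_map_eq_zero _).2 fun A hA =>
    Subtype.ext (eq_zero_of_solution_near hσ hκ hx hA A.2))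

theorem semiMult_whittakerHill (hsmall : 8 * coupling α β * (j + 1) ≤ 1)
    (hA : IsEigenpair α β 1 j μ A) (hA' : IsEigenpair α β (-1) j μ' A')
    (hx : |x - oddSq j| ≤ 1) : semiMult (whittakerHill α β) (x - 2 * α ^ 2)
      = (if x = μ then 1 else 0) + (if x = μ' then 1 else 0) := by
  have hκ : coupling α β ≤ 1 / 2 := (coupling_le_of_small hsmall).trans (by norm_num)
  have := finite_solutionSpace isParity_cos.abs_le_one hκ hx
  have := finite_solutionSpace isParity_sin.abs_le_one hκ hx
  have free (σ : ℝ) : Module.Free ℝ (solutionSpace α β σ x) :=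
    Module.Free.of_divisionRing ℝ (solutionSpace α β σ x)
  rw [semiMult_eq_finrank, (semiSpaceEquiv α β x).finrank_eq, Module.finrank_prod,
    finrank_solutionSpace isParity_cos.abs_le_one hsmall hA hx,
    finrank_solutionSpace isParity_sin.abs_le_one hsmall hA' hx]

lemma eq_or_eq_of_isSemiEF (hsmall : 8 * coupling α β * (j + 1) ≤ 1)
    (hA : IsEigenpair α β 1 j μ A) (hA' : IsEigenpair α β (-1) j μ' A')
    (hx : |x - oddSq j| ≤ 1) (hf : IsSemiEF (whittakerHill α β) (x - 2 * α ^ 2) f)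
    (hf_ne : f ≠ 0) : x = μ ∨ x = μ' := by
  contrapose! hf_ne
  exact eq_zero_of_solutionSpace_eq_bot
    (solutionSpace_eq_bot_of_ne isParity_cos.abs_le_one hsmall hA hx hf_ne.1)
    (solutionSpace_eq_bot_of_ne isParity_sin.abs_le_one hsmall hA' hx hf_ne.2) hf

lemma exists_abs_sub_oddSq_le_of_isSemiEF (hκ : (m + 1) * coupling α β ≤ 1 / 2)
    (hx : x ≤ oddSq m + 1) (hf : IsSemiEF (whittakerHill α β) (x - 2 * α ^ 2) f)
    (hf_ne : f ≠ 0) : ∃ k ≤ m, |x - oddSq k| ≤ 1 := by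
  contrapose! hf_ne
  have eq_bot {σ θ : ℝ} (h : IsParity σ θ) : solutionSpace α β σ x = ⊥ :=
    (Submodule.eq_bot_iff _).mpr fun _ hA =>
      eq_zero_of_solution_away h.abs_le_one hκ hx hf_ne hA
  exact eq_zero_of_solutionSpace_eq_bot (eq_bot isParity_cos) (eq_bot isParity_sin) hf

end Multiplicity

section Enumeration

/-- `ν` enumerates, from the index `0` on, in nondecreasing order and with multiplicity, the numbers
`λ + 2 α ^ 2` for the semi-periodic eigenvalues `λ` of the Whittaker–Hill operator. The shift makes
the eigenvalues the spectral parameters of the recursion. -/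
structure IsShiftedEnum (α β : ℝ) (ν : ℕ → ℝ) : Prop where
  mono : Monotone ν
  exists_isSemiEF : ∀ n, ∃ f, f ≠ 0 ∧ IsSemiEF (whittakerHill α β) (ν n - 2 * α ^ 2) f
  ncard_fiber : ∀ x, {n | ν n = x}.ncard = semiMult (whittakerHill α β) (x - 2 * α ^ 2)

/-- The indices of the members of the sequence `ν` that are close to `oddSq k`. -/
def cluster (ν : ℕ → ℝ) (k : ℕ) : Set ℕ := {n | |ν n - oddSq k| ≤ 1}

variable {α β μ μ' : ℝ} {ν : ℕ → ℝ} {i j k m n : ℕ} {A A' : ℕ →ᵇ ℝ}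

lemma isShiftedEnum_of_enumSemi {lam : ℕ → ℝ} (h : EnumSemi (whittakerHill α β) lam) :
    IsShiftedEnum α β fun n => lam (n + 1) + 2 * α ^ 2 := by
  obtain ⟨mono, exists_isSemiEF, card_fiber⟩ := h
  refine ⟨fun m n hmn => ?_, fun n => ?_, fun x => ?_⟩
  · exact add_le_add_left (mono (by simp) (by simp) (by gcongr)) _
  · simpa using exists_isSemiEF (n + 1) (by simp)
  · have fiber : Nat.succ '' {n | lam (n + 1) + 2 * α ^ 2 = x}
        = {n | 1 ≤ n ∧ lam n = x - 2 * α ^ 2} := by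
      ext (_ | n) <;> simp [eq_sub_iff_add_eq]
    rw [← card_fiber, ← Set.ncard_image_of_injective _ Nat.succ_injective, fiber]
    rfl

lemma mem_cluster : n ∈ cluster ν k ↔ oddSq k - 1 ≤ ν n ∧ ν n ≤ oddSq k + 1 := by
  rw [cluster, Set.mem_ofPred_eq, abs_sub_le_iff, sub_le_iff_le_add', sub_le_comm, and_comm]

lemma oddSq_add_eight_le (h : i < k) : oddSq i + 8 ≤ oddSq k := by
  have : (i : ℝ) + 1 ≤ k := by exact_mod_cast h
  unfold oddSq
  nlinarith [(Nat.cast_nonneg i : (0 : ℝ) ≤ i)]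

lemma le_of_mem_cluster (hν : Monotone ν) (hmn : m ≤ n) (hm : m ∈ cluster ν i)
    (hn : n ∈ cluster ν k) : i ≤ k := by
  by_contra! h
  linarith [oddSq_add_eight_le h, hν hmn, (mem_cluster.mp hm).1, (mem_cluster.mp hn).2]

lemma disjoint_cluster (hν : Monotone ν) (hik : i ≠ k) :
    Disjoint (cluster ν i) (cluster ν k) :=
  Set.disjoint_left.mpr fun _ hi hk =>
    hik ((le_of_mem_cluster hν le_rfl hi hk).antisymm (le_of_mem_cluster hν le_rfl hk hi))

lemma biUnion_cluster_eq_Iio (hν : Monotone ν)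
    (hnear : ∀ n, ν n ≤ oddSq j + 1 → ∃ k ≤ j, n ∈ cluster ν k)
    (hcard : ∀ k ≤ j, (cluster ν k).ncard = 2) (hk : k ≤ j + 1) :
    ⋃ i < k, cluster ν i = Set.Iio (2 * k) := by
  have finite : ∀ i < k, (cluster ν i).Finite := fun i hi =>
    Set.finite_of_ncard_ne_zero (by rw [hcard i (by lia)]; exact two_ne_zero)
  have ncard : (⋃ i < k, cluster ν i).ncard = 2 * k := by
    simp only [← Set.mem_Iio]
    rw [(Set.finite_Iio k).ncard_biUnion finite fun i _ i' _ => disjoint_cluster hν,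
      ← Finset.coe_Iio, finsum_mem_coe_finset,
      Finset.sum_congr rfl fun i hi => hcard i (by have := Finset.mem_Iio.mp hi; lia)]
    simp [mul_comm]
  have lower : IsLowerSet (⋃ i < k, cluster ν i) := fun n p hpn hn => by
    simp only [Set.mem_iUnion, exists_prop] at hn ⊢
    obtain ⟨i, hi, hn⟩ := hn
    have hi' : oddSq i ≤ oddSq j := by
      rcases (Nat.lt_succ_iff.mp (hi.trans_le hk)).eq_or_lt with rfl | h
      · rfl
      · linarith [oddSq_add_eight_le h]
    obtain ⟨i', -, hp⟩ := hnear p (by linarith [hν hpn, (mem_cluster.mp hn).2])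
    exact ⟨i', (le_of_mem_cluster hν hpn hp hn).trans_lt hi, hp⟩
  obtain h | ⟨n, h⟩ := lower.eq_univ_or_Iio
  · exact absurd (h ▸ (Set.finite_Iio k).biUnion finite) Set.infinite_univ
  · rw [h, ← Finset.coe_Iio, Set.ncard_coe_finset, Nat.card_Iio] at ncard
    rw [h, ncard]

lemma cluster_eq_pair (hν : Monotone ν)
    (hnear : ∀ n, ν n ≤ oddSq j + 1 → ∃ k ≤ j, n ∈ cluster ν k)
    (hcard : ∀ k ≤ j, (cluster ν k).ncard = 2) : cluster ν j = {2 * j, 2 * j + 1} := by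
  have below := biUnion_cluster_eq_Iio hν hnear hcard j.le_succ
  have upto := biUnion_cluster_eq_Iio hν hnear hcard le_rfl
  have disjoint : Disjoint (⋃ i < j, cluster ν i) (cluster ν j) :=
    Set.disjoint_iUnion₂_left.mpr fun i hi => disjoint_cluster hν hi.ne
  rw [Set.biUnion_lt_succ, below] at upto
  rw [below] at disjoint
  rw [← Set.union_sdiff_cancel_left disjoint.le_bot, upto]
  ext n
  simp only [Set.mem_sdiff, Set.mem_Iio, Set.mem_insert_iff, Set.mem_singleton_iff]
  lia

lemma sub_eq_abs_sub_of_pair_eq {x y : ℝ} (hxy : x ≤ y) (h : ({x, y} : Set ℝ) = {μ, μ'}) :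
    y - x = |μ - μ'| := by
  rw [← abs_of_nonneg (sub_nonneg.mpr hxy)]
  rcases Set.pair_eq_pair_iff.mp h with ⟨rfl, rfl⟩ | ⟨rfl, rfl⟩
  · exact abs_sub_comm _ _
  · rfl

lemma IsShiftedEnum.cluster_eq_union (hν : IsShiftedEnum α β ν)
    (hsmall : 8 * coupling α β * (j + 1) ≤ 1) (hA : IsEigenpair α β 1 j μ A)
    (hA' : IsEigenpair α β (-1) j μ' A') :
    cluster ν j = {n | ν n = μ} ∪ {n | ν n = μ'} := by
  ext n
  refine ⟨fun hn => ?_, ?_⟩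
  · obtain ⟨f, hf_ne, hf⟩ := hν.exists_isSemiEF n
    exact eq_or_eq_of_isSemiEF hsmall hA hA' hn hf hf_ne
  · rintro (rfl | rfl)
    exacts [hA.near, hA'.near]

lemma IsShiftedEnum.ncard_fiber_eq (hν : IsShiftedEnum α β ν)
    (hsmall : 8 * coupling α β * (j + 1) ≤ 1) (hA : IsEigenpair α β 1 j μ A)
    (hA' : IsEigenpair α β (-1) j μ' A') {x : ℝ} (hx : |x - oddSq j| ≤ 1) :
    {n | ν n = x}.ncard = (if x = μ then 1 else 0) + (if x = μ' then 1 else 0) := by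
  rw [hν.ncard_fiber, semiMult_whittakerHill hsmall hA hA' hx]

lemma IsShiftedEnum.ncard_cluster (hν : IsShiftedEnum α β ν)
    (hsmall : 8 * coupling α β * (j + 1) ≤ 1) : (cluster ν j).ncard = 2 := by
  obtain ⟨μ, A, hA⟩ := exists_isEigenpair (j := j) isParity_cos.abs_le_one hsmall
  obtain ⟨μ', A', hA'⟩ := exists_isEigenpair (j := j) isParity_sin.abs_le_one hsmall
  have card := hν.ncard_fiber_eq hsmall hA hA' hA.near
  have card' := hν.ncard_fiber_eq hsmall hA hA' hA'.near
  rw [hν.cluster_eq_union hsmall hA hA']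
  rcases eq_or_ne μ μ' with rfl | hne
  · rw [Set.union_self, card, if_pos rfl]
  rw [if_pos rfl, if_neg hne] at card
  rw [if_neg hne.symm, if_pos rfl] at card'
  rw [Set.ncard_union_eq _ (Set.finite_of_ncard_ne_zero (by lia))
    (Set.finite_of_ncard_ne_zero (by lia)), card, card']
  exact Set.disjoint_left.mpr fun n h h' => hne (h.symm.trans h')

lemma IsShiftedEnum.image_cluster (hν : IsShiftedEnum α β ν)
    (hsmall : 8 * coupling α β * (j + 1) ≤ 1) (hA : IsEigenpair α β 1 j μ A)
    (hA' : IsEigenpair α β (-1) j μ' A') : ν '' cluster ν j = {μ, μ'} := by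
  have attained {x : ℝ} (hx : x = μ ∨ x = μ') (hx' : |x - oddSq j| ≤ 1) : ∃ n, ν n = x :=
    Set.nonempty_of_ncard_ne_zero (s := {n | ν n = x}) <| by
      rw [hν.ncard_fiber_eq hsmall hA hA' hx']
      rcases hx with rfl | rfl <;> simp
  rw [hν.cluster_eq_union hsmall hA hA', Set.image_union, Set.insert_eq]
  congr 1
  · obtain ⟨n, hn⟩ := attained (.inl rfl) hA.near
    exact Set.eq_singleton_iff_unique_mem.mpr ⟨⟨n, hn, hn⟩, by rintro _ ⟨n, hn, rfl⟩; exact hn⟩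
  · obtain ⟨n, hn⟩ := attained (.inr rfl) hA'.near
    exact Set.eq_singleton_iff_unique_mem.mpr ⟨⟨n, hn, hn⟩, by rintro _ ⟨n, hn, rfl⟩; exact hn⟩

theorem IsShiftedEnum.sub_eq_abs_sub (hν : IsShiftedEnum α β ν)
    (hsmall : 8 * coupling α β * (j + 1) ≤ 1) (hA : IsEigenpair α β 1 j μ A)
    (hA' : IsEigenpair α β (-1) j μ' A') : ν (2 * j + 1) - ν (2 * j) = |μ - μ'| := by
  refine sub_eq_abs_sub_of_pair_eq (hν.mono (2 * j).le_succ) ?_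
  rw [← hν.image_cluster hsmall hA hA', cluster_eq_pair hν.mono (fun n hn => ?_) fun k hk => ?_,
    Set.image_pair]
  · obtain ⟨f, hf_ne, hf⟩ := hν.exists_isSemiEF n
    exact exists_abs_sub_oddSq_le_of_isSemiEF (by linarith) hn hf hf_ne
  · have hk' : (k : ℝ) ≤ j := by exact_mod_cast hk
    refine hν.ncard_cluster (le_trans ?_ hsmall)
    have := coupling_nonneg α β
    gcongr

theorem gap_sub_abs_leadingGap_isBigO {ι : Type*} {l : Filter ι} {α β : ι → ℝ} {lam : ι → ℕ → ℝ}
    (hκ : Tendsto (fun i => coupling (α i) (β i)) l (𝓝 0))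
    (hlam : ∀ᶠ i in l, EnumSemi (whittakerHill (α i) (β i)) (lam i)) (j : ℕ) :
    (fun i => lam i (2 * j + 2) - lam i (2 * j + 1) - |leadingGap (α i) (β i) j|)
      =O[l] fun i => coupling (α i) (β i) ^ (2 * j + 3) := by
  have hsmall : ∀ᶠ i in l, 8 * coupling (α i) (β i) * (j + 1) ≤ 1 := by
    have : Tendsto (fun i => 8 * coupling (α i) (β i) * (j + 1)) l (𝓝 (8 * 0 * (j + 1))) :=
      (hκ.const_mul 8).mul_const _
    exact (this.eventually_lt_const (by norm_num)).mono fun _ h => h.le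
  choose! μ A hA using fun i => exists_isEigenpair (α := α i) (β := β i) (j := j)
    isParity_cos.abs_le_one
  choose! μ' A' hA' using fun i => exists_isEigenpair (α := α i) (β := β i) (j := j)
    isParity_sin.abs_le_one
  refine (abs_sub_sub_abs_leadingGap_isBigO hκ (hsmall.mono fun i h => ⟨A i, hA i h⟩)
    (hsmall.mono fun i h => ⟨A' i, hA' i h⟩)).congr' ?_ .rfl
  filter_upwards [hlam, hsmall] with i hlam hsmall
  rw [← (isShiftedEnum_of_enumSemi hlam).sub_eq_abs_sub hsmall (hA i hsmall) (hA' i hsmall),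
    add_sub_add_right_eq_sub]

end Enumeration

section ScaledPotential

variable {b c Q : ℝ}

lemma whittakerHill_eq (b : ℝ) (hc : c ≤ 0) (Q : ℝ) :
    whittakerHill (√(-c / 2) * Q) (-b / 2 * Q)
      = fun x => b * Q * cos (2 * x) + c * Q ^ 2 * cos (4 * x) := by
  ext x
  rw [whittakerHill, mul_pow, sq_sqrt (by linarith)]
  ring

lemma coupling_mul (α β : ℝ) (hQ : 0 ≤ Q) : coupling (α * Q) (β * Q) = coupling α β * Q := by
  rw [coupling, coupling, abs_mul, abs_mul, abs_of_nonneg hQ]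
  ring

lemma leadingGap_eq (α β : ℝ) (j : ℕ) : leadingGap α β j
    = 2 * (β * ∏ k ∈ Finset.Icc 1 j, (β ^ 2 - 16 * α ^ 2 * (k : ℝ) ^ 2)) /
      (∏ k ∈ Finset.range j, (oddSq k - oddSq j)) ^ 2 := by
  have factor (k : ℕ) :
      upper α β k * lower α β (k + 1) = β ^ 2 - 16 * α ^ 2 * ((k + 1 : ℕ) : ℝ) ^ 2 := by
    rw [upper, lower]; push_cast; ring
  simp only [leadingGap, factor, ← mul_assoc]
  rw [Finset.range_eq_Ico, Finset.prod_Ico_add' fun k : ℕ => β ^ 2 - 16 * α ^ 2 * (k : ℝ) ^ 2]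
  rfl

lemma leadingGap_mul (α β Q : ℝ) (j : ℕ) :
    leadingGap (α * Q) (β * Q) j = leadingGap α β j * Q ^ (2 * j + 1) := by
  have factor (k : ℕ) : (β * Q) ^ 2 - 16 * (α * Q) ^ 2 * (k : ℝ) ^ 2
      = Q ^ 2 * (β ^ 2 - 16 * α ^ 2 * (k : ℝ) ^ 2) := by ring
  simp only [leadingGap_eq, factor]
  rw [Finset.prod_mul_distrib, Finset.prod_const, Nat.card_Icc, Nat.add_sub_cancel, ← pow_mul]
  ring

lemma prod_oddSq_sub_oddSq_sq (j : ℕ) :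
    (∏ k ∈ Finset.range j, (oddSq k - oddSq j)) ^ 2 = 16 ^ j * ((2 * j).factorial : ℝ) ^ 2 := by
  have factor (k : ℕ) : oddSq k - oddSq j = -4 * ((j - k) * (j + 1 + k)) := by
    unfold oddSq; ring
  have descending : ∏ k ∈ Finset.range j, ((j : ℝ) - k) = j.factorial := by
    rw [← Nat.descFactorial_self, Nat.descFactorial_eq_prod_range, Nat.cast_prod]
    exact Finset.prod_congr rfl fun k hk => (Nat.cast_sub (Finset.mem_range.mp hk).le).symm
  have ascending : ∏ k ∈ Finset.range j, ((j : ℝ) + 1 + k) = (j + 1).ascFactorial j := by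
    rw [Nat.ascFactorial_eq_prod_range]; push_cast; rfl
  simp only [factor]
  rw [Finset.prod_mul_distrib, Finset.prod_mul_distrib, Finset.prod_const, Finset.card_range,
    descending, ascending, ← Nat.cast_mul, Nat.factorial_mul_ascFactorial, mul_pow, ← pow_mul,
    pow_mul', ← two_mul]
  norm_num

lemma abs_leadingGap (b : ℝ) (hc : c ≤ 0) (j : ℕ) : |leadingGap (√(-c / 2)) (-b / 2) j|
    = 32 * |b / 2 * ∏ k ∈ Finset.Icc 1 j, ((b / 2) ^ 2 + 8 * c * (k : ℝ) ^ 2)| /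
      (2 ^ (4 * (j + 1)) * ((2 * j).factorial : ℝ) ^ 2) := by
  have factor (k : ℕ) : (-b / 2) ^ 2 - 16 * √(-c / 2) ^ 2 * (k : ℝ) ^ 2
      = (b / 2) ^ 2 + 8 * c * (k : ℝ) ^ 2 := by
    rw [sq_sqrt (by linarith)]; ring
  simp only [leadingGap_eq, factor]
  rw [prod_oddSq_sub_oddSq_sq, neg_div, neg_mul, mul_neg, neg_div, abs_neg, abs_div, abs_mul 2,
    abs_two, abs_of_pos (by positivity : (0 : ℝ) < 16 ^ j * ((2 * j).factorial : ℝ) ^ 2),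
    div_eq_div_iff (by positivity) (by positivity), pow_mul]
  ring

theorem gap_sub_isBigO {ι : Type*} {l : Filter ι} {Q : ι → ℝ} {lam : ι → ℕ → ℝ} (b : ℝ)
    (hc : c ≤ 0) (hQ : Tendsto Q l (𝓝[>] 0))
    (hlam : ∀ᶠ i in l,
      EnumSemi (fun x => b * Q i * cos (2 * x) + c * Q i ^ 2 * cos (4 * x)) (lam i)) (j : ℕ) :
    (fun i => lam i (2 * j + 2) - lam i (2 * j + 1)
        - |leadingGap (√(-c / 2)) (-b / 2) j| * Q i ^ (2 * j + 1))
      =O[l] fun i => Q i ^ (2 * j + 3) := by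
  obtain ⟨hQ₀, hQ_pos⟩ := tendsto_nhdsWithin_iff.mp hQ
  have coupling_eq : (fun i => coupling (√(-c / 2) * Q i) (-b / 2 * Q i))
      =ᶠ[l] fun i => coupling √(-c / 2) (-b / 2) * Q i :=
    hQ_pos.mono fun i hi => coupling_mul _ _ hi.le
  have hκ : Tendsto (fun i => coupling (√(-c / 2) * Q i) (-b / 2 * Q i)) l (𝓝 0) := by
    simpa using (hQ₀.const_mul _).congr' coupling_eq.symm
  simp only [← whittakerHill_eq b hc] at hlam
  have pow_isBigO : (fun i => coupling (√(-c / 2) * Q i) (-b / 2 * Q i) ^ (2 * j + 3))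
      =O[l] fun i => Q i ^ (2 * j + 3) :=
    (coupling_eq.trans_isBigO (isBigO_const_mul_self _ _ _)).pow _
  refine ((gap_sub_abs_leadingGap_isBigO hκ hlam j).trans pow_isBigO).congr' ?_ .rfl
  filter_upwards [hQ_pos] with i hi
  rw [leadingGap_mul, abs_mul, abs_of_pos (pow_pos (Set.mem_Ioi.mp hi) _)]

end ScaledPotential

end WhittakerHill

open WhittakerHill Filter Topology in
theorem stmt7_general (b c m1 : ℝ) (hc : c ≤ 0) (hm1 : 0 < m1)
    (m : ℕ) (hm : 1 ≤ m) (lamM : ℝ → ℕ → ℝ)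
    (hM : ∀ q : ℝ, 0 < q →
      EnumSemi (fun x => b * q ^ m1 * Real.cos (2 * x) + c * q ^ (2 * m1) * Real.cos (4 * x))
        (lamM q)) :
    ∃ C > 0, ∃ δ > 0, ∀ q : ℝ, 0 < q → q < δ →
      |lamM q (2 * m) - lamM q (2 * m - 1) -
          32 * |(b / 2) * ∏ k ∈ Finset.Icc 1 (m - 1), ((b / 2) ^ 2 + 8 * c * (k : ℝ) ^ 2)| *
            q ^ (m1 * (2 * (m : ℝ) - 1)) / (2 ^ (4 * m) * (((2 * m - 2).factorial : ℝ)) ^ 2)| ≤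
        C * q ^ (m1 * (2 * (m : ℝ) + 1)) := by
  obtain ⟨j, rfl⟩ := Nat.exists_eq_add_of_le' hm
  have hQ : Tendsto (fun q : ℝ => q ^ m1) (𝓝[>] 0) (𝓝[>] 0) :=
    tendsto_nhdsWithin_iff.mpr
      ⟨((continuous_rpow_const hm1.le).tendsto' 0 0 (zero_rpow hm1.ne')).mono_left
        nhdsWithin_le_nhds, eventually_mem_nhdsWithin.mono fun q hq => rpow_pos_of_pos hq m1⟩
  have hlam : ∀ᶠ q in 𝓝[>] (0 : ℝ), EnumSemi
      (fun x => b * q ^ m1 * cos (2 * x) + c * (q ^ m1) ^ 2 * cos (4 * x)) (lamM q) := by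
    filter_upwards [self_mem_nhdsWithin] with q hq
    have := hM q hq
    rwa [mul_comm 2 m1, rpow_mul (Set.mem_Ioi.mp hq).le, rpow_two] at this
  obtain ⟨C, hC, bound⟩ := (gap_sub_isBigO b hc hQ hlam j).exists_pos
  obtain ⟨δ, hδ, hbound⟩ := mem_nhdsGT_iff_exists_Ioo_subset.mp bound.bound
  refine ⟨C, hC, δ, hδ, fun q hq hqδ => ?_⟩
  have h := hbound ⟨hq, hqδ⟩
  have exponent : 2 * ((j + 1 : ℕ) : ℝ) - 1 = (2 * j + 1 : ℕ) := by push_cast; ring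
  have exponent' : 2 * ((j + 1 : ℕ) : ℝ) + 1 = (2 * j + 3 : ℕ) := by push_cast; ring
  have h_pow : 0 < (q ^ m1) ^ (2 * j + 3) := pow_pos (rpow_pos_of_pos hq m1) _
  rw [Set.mem_ofPred_eq, norm_eq_abs, norm_of_nonneg h_pow.le, abs_leadingGap b hc,
    div_mul_eq_mul_div] at h
  rwa [exponent, exponent', rpow_mul_natCast hq.le, rpow_mul_natCast hq.le]

theorem stmt7 (b c m1 : ℝ) (hc : c < 0) (hm1 : 0 < m1)
    (m : ℕ) (hm : 2 ≤ m) (lamP lamM : ℝ → ℕ → ℝ)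
    (hP : ∀ q : ℝ, 0 < q →
      EnumPer (fun x => b * q ^ m1 * Real.cos (2 * x) + c * q ^ (2 * m1) * Real.cos (4 * x))
        (lamP q))
    (hM : ∀ q : ℝ, 0 < q →
      EnumSemi (fun x => b * q ^ m1 * Real.cos (2 * x) + c * q ^ (2 * m1) * Real.cos (4 * x))
        (lamM q)) :
    ∃ C > 0, ∃ δ > 0, ∀ q : ℝ, 0 < q → q < δ →
      |gapLen (lamP q) (lamM q) (2 * m - 1) -
          32 * |(b / 2) * ∏ k ∈ Finset.Icc 1 (m - 1), ((b / 2) ^ 2 + 8 * c * (k : ℝ) ^ 2)| *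
            q ^ (m1 * (2 * (m : ℝ) - 1)) / (2 ^ (4 * m) * (((2 * m - 2).factorial : ℝ)) ^ 2)| ≤
        C * q ^ (m1 * (2 * (m : ℝ) + 1)) := by
  simpa [gapLen, show Odd (2 * m - 1) from ⟨m - 1, by lia⟩, show 2 * m - 1 + 1 = 2 * m by lia]
    using stmt7_general b c m1 hc.le hm1 m (by lia) lamM hM
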